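/- Let m ≥ 1 be an integer, let A_0, …, A_{m−1} > 1 and c_0, …, c_{m−1} > 0 be real numbers. Set β_{−1} = 1 and β_i = A_0·A_1⋯A_i for 0 ≤ i ≤ m−1, and put d_0 = s_{β_0} and d_i = g_{β_i, β_{i−1}} for 1 ≤ i ≤ m−1. Let S_m = { x ∈ (0,1) irrational : there are infinitely many n ∈ ℕ such that c_i·A_i^n ≤ a_{n+i}(x) < 2·c_i·A_i^n for every 0 ≤ i ≤ m−1 }. Then dim_H S_m = min_{0 ≤ i ≤ m−1} d_i. -/

import Mathlib

open Filter MeasureTheory Set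

/-- The Gauss map `T(x) = 1/x - ⌊1/x⌋`. -/
noncomputable def gaussMap (x : ℝ) : ℝ := 1 / x - (⌊1 / x⌋ : ℤ)

/-- The `n`-th partial quotient `a_n(x)` (for `n ≥ 1`) of the continued
fraction expansion of `x`: `a_n(x) = ⌊1 / T^{n-1}(x)⌋`. -/
noncomputable def pq (x : ℝ) (n : ℕ) : ℕ := ⌊1 / (gaussMap^[n - 1] x)⌋₊

/-- The continuant `q_n(a_1, …, a_n)`: `q_0 = 1`, `q_1 = a_1`,
`q_k = a_k q_{k-1} + q_{k-2}`. -/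
def contQ : (n : ℕ) → (Fin n → ℕ) → ℕ
  | 0, _ => 1
  | 1, a => a 0
  | (n + 2), a =>
      a (Fin.last (n + 1)) * contQ (n + 1) (Fin.init a) +
        contQ n (Fin.init (Fin.init a))

/-- `s_B`: the Wang–Wu pressure exponent. -/
noncomputable def sExp (B : ℝ) : ℝ :=
  sInf {s : ℝ | 0 ≤ s ∧
    Filter.atTop.limsup (fun n : ℕ =>
      (((n : ℝ)⁻¹ : ℝ) : EReal) * ENNReal.log (∑' a : Fin n → ℕ+,
        ENNReal.ofReal ((B ^ n * ((contQ n fun i => (a i : ℕ)) : ℝ) ^ 2) ^ (-s)))) ≤ 0}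

/-- `g_{B₁,B₂}`: the two-parameter pressure exponent. -/
noncomputable def gExp (B₁ B₂ : ℝ) : ℝ :=
  sInf {s : ℝ | 0 ≤ s ∧
    Filter.atTop.limsup (fun n : ℕ =>
      (((n : ℝ)⁻¹ : ℝ) : EReal) * ENNReal.log (∑' a : Fin n → ℕ+,
        ENNReal.ofReal (B₂ ^ ((1 - s) * (n : ℝ)) *
          (B₁ ^ n * ((contQ n fun i => (a i : ℕ)) : ℝ) ^ 2) ^ (-s)))) ≤ 0}

/-- `β_i = A_0 ⋯ A_i`. -/
noncomputable def betaProd (A : ℕ → ℝ) (i : ℕ) : ℝ := ∏ j ∈ Finset.range (i + 1), A j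

/-- The dimensional numbers `d_0 = s_{β_0}` and `d_i = g_{β_i, β_{i-1}}` for `i ≥ 1`. -/
noncomputable def dimNum (A : ℕ → ℝ) (i : ℕ) : ℝ :=
  if i = 0 then sExp (betaProd A 0) else gExp (betaProd A i) (betaProd A (i - 1))


/-! ### Continued fraction basics -/

/-- Continuants along a sequence. -/
def cK (a : ℕ → ℕ) : ℕ → ℕ
  | 0 => 1
  | 1 => a 0
  | (n + 2) => a (n + 1) * cK a (n + 1) + cK a n

/-- Previous continuant. -/
def cK' (a : ℕ → ℕ) : ℕ → ℕ
  | 0 => 0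
  | (n + 1) => cK a n

lemma contQ_eq (a : ℕ → ℕ) : ∀ n : ℕ, contQ n (fun i => a i) = cK a n
  | 0 => rfl
  | 1 => rfl
  | (n + 2) => by
    have h1 := contQ_eq a (n + 1)
    have h2 := contQ_eq a n
    simp only [contQ, cK]
    rw [← h1, ← h2]
    rfl

lemma cK_succ (a : ℕ → ℕ) (n : ℕ) : cK a (n + 1) = a n * cK a n + cK' a n := by
  cases n <;> simp [cK, cK']

lemma cK_congr {a b : ℕ → ℕ} : ∀ n : ℕ, (∀ k < n, a k = b k) → cK a n = cK b n
  | 0, _ => rfl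
  | 1, h => by simp [cK, h 0]
  | (n + 2), h => by
    simp only [cK]
    rw [cK_congr (n + 1) (fun k hk => h k (by omega)), cK_congr n (fun k hk => h k (by omega)),
      h (n + 1) (by omega)]

lemma cK_mono_succ {a : ℕ → ℕ} (ha : ∀ k, 1 ≤ a k) (n : ℕ) : cK a n ≤ cK a (n + 1) := by
  rw [cK_succ]
  nlinarith [ha n, Nat.zero_le (cK a n), Nat.zero_le (cK' a n)]

lemma cK_mono {a : ℕ → ℕ} (ha : ∀ k, 1 ≤ a k) : Monotone (cK a) :=
  monotone_nat_of_le_succ (cK_mono_succ ha)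

lemma cK_pos {a : ℕ → ℕ} (ha : ∀ k, 1 ≤ a k) (n : ℕ) : 1 ≤ cK a n :=
  cK_mono ha (Nat.zero_le n)

lemma cK'_le {a : ℕ → ℕ} (ha : ∀ k, 1 ≤ a k) (n : ℕ) : cK' a n ≤ cK a n := by
  cases n with
  | zero => simp [cK']
  | succ n => exact cK_mono_succ ha n

lemma cK_ge {a : ℕ → ℕ} (ha : ∀ k, 1 ≤ a k) (n : ℕ) : n ≤ cK a n := by
  induction n using Nat.strong_induction_on with
  | _ n ih =>
    match n with
    | 0 => simp
    | 1 => exact cK_pos ha 1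
    | (n + 2) =>
      have h1 := ih (n + 1) (by omega)
      have h2 := cK_pos ha n
      simp only [cK]
      nlinarith [ha (n + 1)]

lemma cK_succ_le {a : ℕ → ℕ} (ha : ∀ k, 1 ≤ a k) (n : ℕ) :
    cK a (n + 1) ≤ cK a n * (a n + 1) := by
  rw [cK_succ]; nlinarith [cK'_le ha n]

lemma le_cK_succ (a : ℕ → ℕ) (n : ℕ) : cK a n * a n ≤ cK a (n + 1) := by
  rw [cK_succ]; nlinarith

lemma cK_add_le_prod {a : ℕ → ℕ} (ha : ∀ k, 1 ≤ a k) (n k : ℕ) :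
    cK a (n + k) ≤ cK a n * ∏ j ∈ Finset.range k, (a (n + j) + 1) := by
  induction k with
  | zero => simp
  | succ k ih =>
    rw [Finset.prod_range_succ, ← mul_assoc]
    exact (cK_succ_le ha (n + k)).trans (Nat.mul_le_mul_right _ ih)

lemma prod_le_cK_add (a : ℕ → ℕ) (n k : ℕ) :
    cK a n * ∏ j ∈ Finset.range k, a (n + j) ≤ cK a (n + k) := by
  induction k with
  | zero => simp
  | succ k ih =>
    rw [Finset.prod_range_succ, ← mul_assoc]
    exact (Nat.mul_le_mul_right _ ih).trans (le_cK_succ a (n + k))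

lemma cK_add_le {a : ℕ → ℕ} (ha : ∀ k, 1 ≤ a k) (n : ℕ) : ∀ k : ℕ,
    cK a (n + k) ≤ 2 * (cK a n * cK (fun j => a (n + j)) k)
  | 0 => by simp [cK]; omega
  | 1 => by
    have := cK_succ_le ha n
    simp only [cK, add_zero]
    nlinarith [ha n, cK_pos ha n]
  | (k + 2) => by
    have h1 := cK_add_le ha n (k + 1)
    have h2 := cK_add_le ha n k
    have : cK a (n + (k + 2)) = a (n + (k + 1)) * cK a (n + (k + 1)) + cK a (n + k) := rfl
    rw [this]
    have : cK (fun j => a (n + j)) (k + 2) = a (n + (k + 1)) * cK (fun j => a (n + j)) (k + 1)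
      + cK (fun j => a (n + j)) k := rfl
    rw [this]
    nlinarith [Nat.mul_le_mul_left (a (n + (k + 1))) h1]

/-- `[0; a 0, …, a (n-1) + t]`. -/
noncomputable def phi (a : ℕ → ℕ) : ℕ → ℝ → ℝ
  | 0, t => t
  | (n + 1), t => phi a n (1 / (a n + t))

/-- Denominator of `phi`. -/
noncomputable def cD (a : ℕ → ℕ) (n : ℕ) (t : ℝ) : ℝ := cK a n + t * cK' a n

lemma cD_succ {a : ℕ → ℕ} (ha : ∀ k, 1 ≤ a k) (n : ℕ) {t : ℝ} (ht : 0 ≤ t) :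
    cD a (n + 1) t = cD a n (1 / (a n + t)) * (a n + t) := by
  have h1 : (1 : ℝ) ≤ a n := by exact_mod_cast ha n
  have : (a n + t : ℝ) ≠ 0 := by positivity
  unfold cD
  rw [cK_succ]
  simp only [cK']
  push_cast
  field_simp
  ring

lemma cD_ge (a : ℕ → ℕ) (n : ℕ) {t : ℝ} (ht : 0 ≤ t) : (cK a n : ℝ) ≤ cD a n t := by
  unfold cD
  have : (0 : ℝ) ≤ t * cK' a n := by positivity
  linarith

lemma cD_le {a : ℕ → ℕ} (ha : ∀ k, 1 ≤ a k) (n : ℕ) {t : ℝ} (ht1 : t ≤ 1) :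
    cD a n t ≤ 2 * (cK a n : ℝ) := by
  unfold cD
  have h : (cK' a n : ℝ) ≤ cK a n := by exact_mod_cast cK'_le ha n
  have h0 : (0 : ℝ) ≤ cK' a n := by positivity
  nlinarith

lemma cK_pos' {a : ℕ → ℕ} (ha : ∀ k, 1 ≤ a k) (n : ℕ) : (0 : ℝ) < cK a n := by
  exact_mod_cast cK_pos ha n

lemma phi_dist {a : ℕ → ℕ} (ha : ∀ k, 1 ≤ a k) (n : ℕ) : ∀ {t t' : ℝ}, 0 ≤ t → 0 ≤ t' →
    |phi a n t - phi a n t'| = |t - t'| / (cD a n t * cD a n t') := by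
  induction n with
  | zero => intro t t' _ _; simp [phi, cD, cK, cK']
  | succ n ih =>
    intro t t' ht ht'
    have h1 : (1 : ℝ) ≤ a n := by exact_mod_cast ha n
    have p1 : (0 : ℝ) < a n + t := by positivity
    have p2 : (0 : ℝ) < a n + t' := by positivity
    have hp := cK_pos' ha n
    have d1 : 0 < cD a n (1 / (a n + t)) := hp.trans_le (cD_ge a n (by positivity))
    have d2 : 0 < cD a n (1 / (a n + t')) := hp.trans_le (cD_ge a n (by positivity))
    simp only [phi]
    rw [ih (by positivity) (by positivity), cD_succ ha n ht, cD_succ ha n ht']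
    have : (1 / (a n + t) - 1 / (a n + t') : ℝ) = -(t - t') / ((a n + t) * (a n + t')) := by
      field_simp; ring
    rw [this, abs_div, abs_neg, abs_of_pos (mul_pos p1 p2)]
    field_simp

lemma phi_dist_le {a : ℕ → ℕ} (ha : ∀ k, 1 ≤ a k) (n : ℕ) {t t' : ℝ} (ht : 0 ≤ t)
    (ht' : 0 ≤ t') : |phi a n t - phi a n t'| ≤ |t - t'| / (cK a n : ℝ) ^ 2 := by
  rw [phi_dist ha n ht ht', sq]
  have hp := cK_pos' ha n
  have h1 := cD_ge a n ht
  have h2 := cD_ge a n ht'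
  have p1 := hp.trans_le h1
  gcongr

lemma phi_dist_ge {a : ℕ → ℕ} (ha : ∀ k, 1 ≤ a k) (n : ℕ) {t t' : ℝ} (ht : 0 ≤ t)
    (ht' : 0 ≤ t') (ht1 : t ≤ 1) (ht1' : t' ≤ 1) :
    |t - t'| / (4 * (cK a n : ℝ) ^ 2) ≤ |phi a n t - phi a n t'| := by
  rw [phi_dist ha n ht ht']
  have hp := cK_pos' ha n
  have h1 := cD_ge a n ht
  have h2 := cD_ge a n ht'
  have h3 := cD_le ha n ht1
  have h4 := cD_le ha n ht1'
  have p1 := hp.trans_le h1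
  have p2 := hp.trans_le h2
  have : cD a n t * cD a n t' ≤ 4 * (cK a n : ℝ) ^ 2 := by nlinarith
  gcongr

lemma phi_congr {a b : ℕ → ℕ} (n : ℕ) : (∀ k < n, a k = b k) → ∀ t, phi a n t = phi b n t := by
  induction n with
  | zero => intro _ t; rfl
  | succ n ih =>
    intro h t
    simp only [phi]
    rw [ih (fun k hk => h k (by omega)), h n (by omega)]

lemma phi_cons (a : ℕ → ℕ) (n : ℕ) : ∀ t, phi a (n + 1) t =
    1 / (a 0 + phi (fun k => a (k + 1)) n t) := by
  induction n with
  | zero => intro t; rfl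
  | succ n ih => intro t; rw [phi, ih]; rfl

lemma phi_add (a : ℕ → ℕ) (n k : ℕ) : ∀ t, phi a (n + k) t =
    phi a n (phi (fun j => a (n + j)) k t) := by
  induction k with
  | zero => intro t; rfl
  | succ k ih => intro t; rw [← add_assoc, phi, ih]; rfl

lemma phi_nonneg (n : ℕ) (a : ℕ → ℕ) : ∀ {t : ℝ}, 0 ≤ t → 0 ≤ phi a n t := by
  induction n with
  | zero => intro t ht; exact ht
  | succ n ih => intro t ht; exact ih (by positivity)

lemma phi_le_one {a : ℕ → ℕ} (ha : ∀ k, 1 ≤ a k) (n : ℕ) : ∀ {t : ℝ}, 0 ≤ t → t ≤ 1 →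
    phi a n t ≤ 1 := by
  induction n with
  | zero => intro t _ ht; exact ht
  | succ n ih =>
    intro t ht _
    have h1 : (1 : ℝ) ≤ a n := by exact_mod_cast ha n
    refine ih (by positivity) ?_
    rw [div_le_one (by positivity)]; linarith

/-- The value of the infinite continued fraction. -/
noncomputable def cF (a : ℕ → ℕ) : ℝ := limUnder atTop (fun n => phi a n 0)

lemma cF_tendsto {a : ℕ → ℕ} (ha : ∀ k, 1 ≤ a k) :
    Tendsto (fun n => phi a n 0) atTop (nhds (cF a)) := by
  have hc : CauchySeq (fun n => phi a n 0) := by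
    refine cauchySeq_of_le_tendsto_0 (fun n : ℕ => 2 * (1 / (cK a n : ℝ))) ?_ ?_
    · intro n k N hn hk
      have key : ∀ j, N ≤ j → dist (phi a j 0) (phi a N 0) ≤ (1 / (cK a N : ℝ)) := by
        intro j hj
        obtain ⟨i, rfl⟩ := Nat.exists_eq_add_of_le hj
        rw [phi_add, Real.dist_eq]
        have ha' : ∀ k, 1 ≤ (fun j => a (N + j)) k := fun k => ha _
        have h0 := phi_nonneg i (fun j => a (N + j)) (le_refl (0 : ℝ))
        have h1 := phi_le_one ha' i (le_refl (0 : ℝ)) zero_le_one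
        refine (phi_dist_le ha N h0 le_rfl).trans ?_
        rw [sub_zero, abs_of_nonneg h0]
        have hN' : (1 : ℝ) ≤ cK a N := by exact_mod_cast cK_pos ha N
        rw [div_le_div_iff₀ (by positivity) (by positivity)]
        nlinarith
      calc dist (phi a n 0) (phi a k 0) ≤ _ := dist_triangle_right _ _ (phi a N 0)
        _ ≤ _ := by linarith [key n hn, key k hk]
    · have : Tendsto (fun n => (cK a n : ℝ)) atTop atTop :=
        tendsto_atTop_mono (fun n => by exact_mod_cast cK_ge ha n) tendsto_natCast_atTop_atTop
      simpa using (this.inv_tendsto_atTop.const_mul 2)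
  exact hc.tendsto_limUnder

lemma cF_mem_Icc {a : ℕ → ℕ} (ha : ∀ k, 1 ≤ a k) : cF a ∈ Icc (0 : ℝ) 1 :=
  isClosed_Icc.mem_of_tendsto (cF_tendsto ha) (Eventually.of_forall fun n =>
    ⟨phi_nonneg n a le_rfl, phi_le_one ha n le_rfl zero_le_one⟩)

lemma cF_cons {a : ℕ → ℕ} (ha : ∀ k, 1 ≤ a k) : cF a = 1 / (a 0 + cF (fun k => a (k + 1))) := by
  have ha' : ∀ k, 1 ≤ (fun k => a (k + 1)) k := fun k => ha _
  have h1 := (tendsto_add_atTop_iff_nat 1).mpr (cF_tendsto ha)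
  have h0 := (cF_mem_Icc ha').1
  have h2 : (1 : ℝ) ≤ a 0 := by exact_mod_cast ha 0
  have h3 : Tendsto (fun n => phi a (n + 1) 0) atTop
      (nhds (1 / (a 0 + cF (fun k => a (k + 1))))) := by
    simp only [phi_cons]
    exact Tendsto.div tendsto_const_nhds ((cF_tendsto ha').const_add _) (by positivity)
  exact tendsto_nhds_unique h1 h3

lemma cF_pos {a : ℕ → ℕ} (ha : ∀ k, 1 ≤ a k) : 0 < cF a := by
  have ha' : ∀ k, 1 ≤ (fun k => a (k + 1)) k := fun k => ha _
  have h0 := (cF_mem_Icc ha').1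
  have h2 : (1 : ℝ) ≤ a 0 := by exact_mod_cast ha 0
  rw [cF_cons ha]; positivity

lemma cF_lt_one {a : ℕ → ℕ} (ha : ∀ k, 1 ≤ a k) : cF a < 1 := by
  have ha' : ∀ k, 1 ≤ (fun k => a (k + 1)) k := fun k => ha _
  have h0 := cF_pos ha'
  have h2 : (1 : ℝ) ≤ a 0 := by exact_mod_cast ha 0
  rw [cF_cons ha, div_lt_one (by positivity)]; linarith

lemma cF_inv {a : ℕ → ℕ} (ha : ∀ k, 1 ≤ a k) : 1 / cF a = a 0 + cF (fun k => a (k + 1)) := by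
  rw [cF_cons ha, one_div_one_div]

lemma gaussMap_cF {a : ℕ → ℕ} (ha : ∀ k, 1 ≤ a k) : gaussMap (cF a) = cF (fun k => a (k + 1)) := by
  have ha' : ∀ k, 1 ≤ (fun k => a (k + 1)) k := fun k => ha _
  unfold gaussMap
  rw [cF_inv ha]
  have : ⌊(a 0 + cF (fun k => a (k + 1)) : ℝ)⌋ = (a 0 : ℤ) := by
    rw [Int.floor_eq_iff]
    have h0 := cF_pos ha'
    have h1 := cF_lt_one ha'
    push_cast
    constructor <;> linarith
  rw [this]; push_cast; ring

lemma gaussMap_iter_cF {a : ℕ → ℕ} (ha : ∀ k, 1 ≤ a k) (n : ℕ) :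
    gaussMap^[n] (cF a) = cF (fun k => a (n + k)) := by
  induction n with
  | zero => simp
  | succ n ih =>
    rw [Function.iterate_succ_apply', ih, gaussMap_cF (fun k => ha _)]
    congr 1; funext k; congr 1; ring

lemma pq_cF {a : ℕ → ℕ} (ha : ∀ k, 1 ≤ a k) (n : ℕ) : pq (cF a) (n + 1) = a n := by
  unfold pq
  rw [Nat.add_sub_cancel, gaussMap_iter_cF ha, cF_inv (fun k => ha _)]
  have h0 := cF_pos (a := fun k => a (n + (k + 1))) (fun k => ha _)
  have h1 := cF_lt_one (a := fun k => a (n + (k + 1))) (fun k => ha _)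
  rw [Nat.floor_eq_iff (by positivity)]
  simp only [add_zero]
  constructor <;> linarith

lemma cF_eq_phi {a : ℕ → ℕ} (ha : ∀ k, 1 ≤ a k) (n : ℕ) :
    cF a = phi a n (cF (fun k => a (n + k))) := by
  induction n with
  | zero => simp [phi]
  | succ n ih =>
    rw [phi, ih]
    congr 1
    rw [cF_cons (fun k => ha _)]
    simp only [add_zero]
    congr 3; funext k; congr 1; ring

/-- Separation of two continued fractions that first differ at position `p`. -/
lemma cF_gap {a b : ℕ → ℕ} (ha : ∀ k, 1 ≤ a k) (hb : ∀ k, 1 ≤ b k) {M : ℕ} (hM : 1 ≤ M) (p : ℕ)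
    (hab : ∀ k < p, a k = b k) (hlt : a p < b p)
    (hadm : (a (p + 1) ≤ M ∧ b (p + 1) ≤ M) ∨ (2 ≤ a (p + 1) ∧ 2 ≤ b (p + 1))) :
    ((b p : ℝ) - a p) / (4 * (M + 1) * (cK a p : ℝ) ^ 2 * ((a p + 1) * (b p + 1)))
      ≤ |cF a - cF b| := by
  have hM' : (1 : ℝ) ≤ M := by exact_mod_cast hM
  have hK := cK_pos' ha p
  set za := cF (fun k => a (p + (k + 1))) with hza
  set zb := cF (fun k => b (p + (k + 1))) with hzb
  have za0 : 0 < za := cF_pos (fun k => ha _)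
  have za1 : za < 1 := cF_lt_one (fun k => ha _)
  have zb0 : 0 < zb := cF_pos (fun k => hb _)
  have zb1 : zb < 1 := cF_lt_one (fun k => hb _)
  have a1 : (1 : ℝ) ≤ a p := by exact_mod_cast ha p
  have b1 : (1 : ℝ) ≤ b p := by exact_mod_cast hb p
  have hd : (a p : ℝ) + 1 ≤ b p := by exact_mod_cast hlt
  have e1 : cF a = phi a p (1 / (a p + za)) := by
    rw [cF_eq_phi ha p, cF_cons (fun k => ha _)]; simp [hza]
  have e2 : cF b = phi a p (1 / (b p + zb)) := by
    rw [cF_eq_phi hb p, cF_cons (fun k => hb _), phi_congr p hab]; simp [hzb]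
  have key : ((b p : ℝ) - a p) / (M + 1) ≤ (b p + zb) - (a p + za) := by
    rw [div_le_iff₀ (by positivity)]
    rcases hadm with ⟨_, h2⟩ | ⟨h1, _⟩
    · have h3 : (b (p + 1) : ℝ) ≤ M := by exact_mod_cast h2
      have hz : 1 / (M + 1 : ℝ) ≤ zb := by
        rw [hzb, cF_cons (fun k => hb _)]
        have w0 : 0 < cF (fun k => b (p + (k + 1 + 1))) := cF_pos (fun k => hb _)
        have w1 : cF (fun k => b (p + (k + 1 + 1))) < 1 := cF_lt_one (fun k => hb _)
        simp only [zero_add]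
        gcongr
      rw [div_le_iff₀ (by positivity)] at hz
      nlinarith
    · have h3 : (2 : ℝ) ≤ a (p + 1) := by exact_mod_cast h1
      have hz : za ≤ 1 / 2 := by
        rw [hza, cF_cons (fun k => ha _)]
        have w0 : 0 < cF (fun k => a (p + (k + 1 + 1))) := cF_pos (fun k => ha _)
        simp only [zero_add]
        gcongr
        linarith
      nlinarith
  rw [e1, e2]
  refine le_trans ?_ (phi_dist_ge ha p (by positivity) (by positivity) ?_ ?_)
  · have pa : (0 : ℝ) < a p + za := by positivity
    have pb : (0 : ℝ) < b p + zb := by positivity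
    have : (1 / (a p + za) - 1 / (b p + zb) : ℝ)
        = ((b p + zb) - (a p + za)) / ((a p + za) * (b p + zb)) := by field_simp
    have hpos : (0 : ℝ) ≤ ((b p : ℝ) - a p) / (M + 1) := by
      apply div_nonneg <;> linarith
    rw [this, abs_of_nonneg (div_nonneg (hpos.trans key) (by positivity)), div_div]
    calc _ = (((b p : ℝ) - a p) / (M + 1)) /
          (((a p + 1) * (b p + 1)) * (4 * (cK a p : ℝ) ^ 2)) := by
            rw [div_div]; congr 1; ring
      _ ≤ _ := by
        have hpos2 := hpos.trans key
        gcongr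
  · rw [div_le_one (by positivity)]; linarith
  · rw [div_le_one (by positivity)]; linarith

lemma measurable_phi {α : Type*} [MeasurableSpace α] {a : α → ℕ → ℕ}
    (ha : ∀ k, Measurable (fun x => a x k)) (n : ℕ) : ∀ {t : α → ℝ}, Measurable t →
    Measurable (fun x => phi (a x) n (t x)) := by
  induction n with
  | zero => intro t ht; exact ht
  | succ n ih =>
    intro t ht
    refine ih (t := fun x => 1 / (a x n + t x)) ?_
    have : Measurable (fun x => (a x n : ℝ)) := measurable_from_top.comp (ha n)
    exact measurable_const.div (this.add ht)

lemma measurable_cF {α : Type*} [MeasurableSpace α] {a : α → ℕ → ℕ}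
    (ha : ∀ k, Measurable (fun x => a x k)) (h1 : ∀ x k, 1 ≤ a x k) :
    Measurable (fun x => cF (a x)) := by
  refine measurable_of_tendsto_metrizable (f := fun n x => phi (a x) n 0)
    (fun n => measurable_phi ha n measurable_const) ?_
  rw [tendsto_pi_nhds]
  exact fun x => cF_tendsto (h1 x)

/-! ### Digits of an irrational number -/

lemma gaussMap_mem {x : ℝ} (hx : x ∈ Ioo (0 : ℝ) 1) (hi : Irrational x) :
    gaussMap x ∈ Ioo (0 : ℝ) 1 ∧ Irrational (gaussMap x) := by
  have hi' : Irrational (gaussMap x) := by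
    unfold gaussMap
    have : Irrational (1 / x) := by rw [one_div]; exact hi.inv
    exact this.sub_intCast _
  refine ⟨⟨?_, ?_⟩, hi'⟩
  · have h : 0 ≤ gaussMap x := Int.fract_nonneg (1 / x)
    exact lt_of_le_of_ne h (fun h0 => hi'.ne_zero h0.symm)
  · exact Int.fract_lt_one (1 / x)

lemma gaussMap_iter_mem {x : ℝ} (hx : x ∈ Ioo (0 : ℝ) 1) (hi : Irrational x) (n : ℕ) :
    gaussMap^[n] x ∈ Ioo (0 : ℝ) 1 ∧ Irrational (gaussMap^[n] x) := by
  induction n with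
  | zero => exact ⟨hx, hi⟩
  | succ n ih => rw [Function.iterate_succ_apply']; exact gaussMap_mem ih.1 ih.2

lemma gaussMap_step {y : ℝ} (hy : y ∈ Ioo (0 : ℝ) 1) :
    1 / y = (⌊1 / y⌋₊ : ℝ) + gaussMap y ∧ 1 ≤ ⌊1 / y⌋₊ := by
  have h1 : 1 ≤ 1 / y := by rw [le_div_iff₀ hy.1]; linarith [hy.2]
  constructor
  · unfold gaussMap
    have : ((⌊1 / y⌋₊ : ℕ) : ℝ) = ((⌊1 / y⌋ : ℤ) : ℝ) := by
      exact_mod_cast natCast_floor_eq_intCast_floor (zero_le_one.trans h1)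
    rw [this]; ring
  · exact Nat.le_floor (by exact_mod_cast h1)

/-- The digit sequence (indexed from `0`). -/
noncomputable def dig (x : ℝ) (k : ℕ) : ℕ := pq x (k + 1)

lemma dig_pos {x : ℝ} (hx : x ∈ Ioo (0 : ℝ) 1) (hi : Irrational x) (k : ℕ) : 1 ≤ dig x k := by
  have := (gaussMap_step (gaussMap_iter_mem hx hi k).1).2
  simpa [dig, pq] using this

lemma iter_eq {x : ℝ} (hx : x ∈ Ioo (0 : ℝ) 1) (hi : Irrational x) (k : ℕ) :
    gaussMap^[k] x = 1 / (dig x k + gaussMap^[k + 1] x) := by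
  have := (gaussMap_step (gaussMap_iter_mem hx hi k).1).1
  rw [Function.iterate_succ_apply']
  have e : (dig x k : ℝ) = (⌊1 / gaussMap^[k] x⌋₊ : ℝ) := by simp [dig, pq]
  rw [e, ← this, one_div_one_div]

lemma eq_phi {x : ℝ} (hx : x ∈ Ioo (0 : ℝ) 1) (hi : Irrational x) (n : ℕ) :
    x = phi (dig x) n (gaussMap^[n] x) := by
  induction n with
  | zero => rfl
  | succ n ih => rw [phi, ← iter_eq hx hi n]; exact ih


/-! ### Pressure -/

/-- Extend a finite word of positive integers to a sequence. -/
def extW {n : ℕ} (u : Fin n → ℕ+) (k : ℕ) : ℕ := if h : k < n then (u ⟨k, h⟩ : ℕ) else 1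

lemma extW_pos {n : ℕ} (u : Fin n → ℕ+) (k : ℕ) : 1 ≤ extW u k := by
  unfold extW; split_ifs
  · exact (u _).2
  · exact le_rfl

lemma contQ_extW {n : ℕ} (u : Fin n → ℕ+) : contQ n (fun i => (u i : ℕ)) = cK (extW u) n := by
  rw [← contQ_eq]; congr 1; funext i; simp [extW]

/-- The pressure sum. -/
noncomputable def pS (B₁ B₂ s : ℝ) (n : ℕ) : ENNReal :=
  ∑' a : Fin n → ℕ+, ENNReal.ofReal (B₂ ^ ((1 - s) * (n : ℝ)) *
          (B₁ ^ n * ((contQ n fun i => (a i : ℕ)) : ℝ) ^ 2) ^ (-s))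

/-- The set in the definition of `gExp`. -/
def gSet (B₁ B₂ : ℝ) : Set ℝ := {s : ℝ | 0 ≤ s ∧
    Filter.atTop.limsup (fun n : ℕ =>
      (((n : ℝ)⁻¹ : ℝ) : EReal) * ENNReal.log (pS B₁ B₂ s n)) ≤ 0}

lemma gExp_eq (B₁ B₂ : ℝ) : gExp B₁ B₂ = sInf (gSet B₁ B₂) := rfl

lemma sExp_eq (B : ℝ) : sExp B = gExp B 1 := by
  simp [sExp, gExp]

lemma log_lt_iff (n : ℕ) (hn : 0 < n) (S : ENNReal) (e : ℝ) :
    (((n : ℝ)⁻¹ : ℝ) : EReal) * ENNReal.log S < (e : EReal) ↔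
      S < ENNReal.ofReal (Real.exp (n * e)) := by
  have hn' : (0 : ℝ) < n := by exact_mod_cast hn
  have hi : (0 : ℝ) < (n : ℝ)⁻¹ := by positivity
  induction S with
  | top => 
    rw [ENNReal.log_top, EReal.coe_mul_top_of_pos hi]
    simp
  | coe r =>
    rcases eq_or_ne r 0 with rfl | hr
    · rw [ENNReal.coe_zero, ENNReal.log_zero, EReal.coe_mul_bot_of_pos hi]
      simp [Real.exp_pos, EReal.bot_lt_coe]
    · have hr' : (0 : ℝ) < r := by positivity
      rw [ENNReal.log_pos_real (by exact_mod_cast hr) (by simp)]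
      rw [← EReal.coe_mul, EReal.coe_lt_coe_iff]
      have : (r : ENNReal) = ENNReal.ofReal (r : ℝ) := by simp
      rw [this, ENNReal.ofReal_lt_ofReal_iff (Real.exp_pos _), ENNReal.toReal_ofReal hr'.le,
        ← Real.log_lt_iff_lt_exp hr', inv_mul_lt_iff₀ hn']

lemma mem_gSet_eventually {B₁ B₂ s : ℝ} (h : s ∈ gSet B₁ B₂) {e : ℝ} (he : 0 < e) :
    ∀ᶠ n : ℕ in atTop, pS B₁ B₂ s n < ENNReal.ofReal (Real.exp (n * e)) := by
  have h1 : Filter.atTop.limsup (fun n : ℕ =>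
      (((n : ℝ)⁻¹ : ℝ) : EReal) * ENNReal.log (pS B₁ B₂ s n)) < (e : EReal) :=
    h.2.trans_lt (by exact_mod_cast he)
  filter_upwards [eventually_lt_of_limsup_lt h1, eventually_gt_atTop 0] with n hn h0
  exact (log_lt_iff n h0 _ _).1 hn

lemma not_mem_gSet {B₁ B₂ s : ℝ} (hs : 0 ≤ s) (h : s ∉ gSet B₁ B₂) :
    ∃ e : ℝ, 0 < e ∧ ∃ᶠ n : ℕ in atTop, ENNReal.ofReal (Real.exp (n * e)) ≤ pS B₁ B₂ s n := by
  have h1 : 0 < Filter.atTop.limsup (fun n : ℕ =>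
      (((n : ℝ)⁻¹ : ℝ) : EReal) * ENNReal.log (pS B₁ B₂ s n)) := by
    by_contra h2
    exact h ⟨hs, not_lt.1 h2⟩
  obtain ⟨e, he0, he1⟩ := EReal.lt_iff_exists_real_btwn.1 h1
  refine ⟨e, by exact_mod_cast he0, ?_⟩
  have h2 := frequently_lt_of_lt_limsup (by isBoundedDefault) he1
  refine (h2.and_eventually (eventually_gt_atTop 0)).mono ?_
  rintro n ⟨hn, h0⟩
  rw [← not_lt, ← log_lt_iff n h0, not_lt]
  exact hn.le

lemma mem_gSet_of {B₁ B₂ s : ℝ} (hs : 0 ≤ s) (h : ∀ e : ℝ, 0 < e →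
    ∀ᶠ n : ℕ in atTop, pS B₁ B₂ s n < ENNReal.ofReal (Real.exp (n * e))) : s ∈ gSet B₁ B₂ := by
  by_contra hc
  obtain ⟨e, he, hf⟩ := not_mem_gSet hs hc
  obtain ⟨n, h1, h2⟩ := (hf.and_eventually (h e he)).exists
  exact absurd h1 (not_le.2 h2)

lemma tele_sum (q q' : ℕ) (hq : 1 ≤ q) :
    ∑' k : ℕ+, ENNReal.ofReal (1 / (((k : ℕ) * q + q' : ℝ) * (((k : ℕ) * q + q' : ℝ) + q)))
      ≤ ENNReal.ofReal (1 / ((q : ℝ) * (q + q'))) := by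
  have hq' : (1 : ℝ) ≤ q := by exact_mod_cast hq
  have e := Equiv.tsum_eq Equiv.pnatEquivNat.symm (fun k : ℕ+ => ENNReal.ofReal
    (1 / (((k : ℕ) * q + q' : ℝ) * (((k : ℕ) * q + q' : ℝ) + q))))
  rw [← e]
  refine ENNReal.tsum_le_of_sum_range_le fun n => ?_
  rw [← ENNReal.ofReal_sum_of_nonneg (fun i _ => by positivity)]
  apply ENNReal.ofReal_le_ofReal
  have : ∀ n : ℕ, ∑ i ∈ Finset.range n, (1 / ((((Equiv.pnatEquivNat.symm i : ℕ+) : ℕ) * q + q' : ℝ)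
      * ((((Equiv.pnatEquivNat.symm i : ℕ+) : ℕ) * q + q' : ℝ) + q)))
      = 1 / ((q : ℝ) * (q + q')) - 1 / (q * ((n + 1) * q + q')) := by
    intro n
    induction n with
    | zero => simp
    | succ n ih =>
      rw [Finset.sum_range_succ, ih]
      simp only [Equiv.pnatEquivNat_symm_apply, Nat.succPNat_coe, Nat.succ_eq_add_one]
      push_cast
      have h1 : ((n + 1 : ℝ) * q + q') ≠ 0 := by positivity
      have h2 : ((n + 1 + 1 : ℝ) * q + q') ≠ 0 := by positivity
      have h3 : ((n + 1 : ℝ) * q + q' + q) ≠ 0 := by positivity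
      field_simp
      ring
  rw [this]
  have : (0 : ℝ) ≤ 1 / (q * ((n + 1) * q + q')) := by positivity
  linarith

lemma sum_cyl (n : ℕ) : ∑' u : Fin n → ℕ+, ENNReal.ofReal
    (1 / ((cK (extW u) n : ℝ) * (cK (extW u) n + cK' (extW u) n))) ≤ 1 := by
  induction n with
  | zero => 
    rw [tsum_eq_single default (fun b hb => absurd (Subsingleton.elim b _) hb)]
    simp [cK, cK']
  | succ n ih =>
    rw [← Equiv.tsum_eq (Fin.snocEquiv (fun _ : Fin (n + 1) => ℕ+))]
    rw [← Equiv.tsum_eq (Equiv.prodComm _ _), ENNReal.tsum_prod']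
    refine (ENNReal.tsum_le_tsum fun u => ?_).trans ih
    refine le_trans (le_of_eq ?_) (tele_sum (cK (extW u) n) (cK' (extW u) n)
      (cK_pos (extW_pos u) n))
    refine tsum_congr fun k => ?_
    have e : ∀ j < n, extW (Fin.snoc (α := fun _ => ℕ+) u k) j = extW u j := by
      intro j hj
      simp [extW, hj, hj.trans (Nat.lt_succ_self n), Fin.snoc]
    have e2 : extW (Fin.snoc (α := fun _ => ℕ+) u k) n = k := by
      simp [extW, Fin.snoc]
    have e3 : cK (extW (Fin.snoc (α := fun _ => ℕ+) u k)) n = cK (extW u) n := cK_congr n e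
    have e4 : cK' (extW (Fin.snoc (α := fun _ => ℕ+) u k)) n = cK' (extW u) n := by
      cases n with
      | zero => rfl
      | succ n => exact cK_congr n (fun j hj => e j (by omega))
    have e5 : cK (extW (Fin.snoc (α := fun _ => ℕ+) u k)) (n + 1)
        = k * cK (extW u) n + cK' (extW u) n := by
      rw [cK_succ, e2, e3, e4]
    have e6 : cK' (extW (Fin.snoc (α := fun _ => ℕ+) u k)) (n + 1) = cK (extW u) n := e3
    change ENNReal.ofReal (1 / ((cK (extW (Fin.snoc (α := fun _ => ℕ+) u k)) (n + 1) : ℝ)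
      * (cK (extW (Fin.snoc (α := fun _ => ℕ+) u k)) (n + 1)
        + cK' (extW (Fin.snoc (α := fun _ => ℕ+) u k)) (n + 1)))) = _
    rw [e5, e6]
    push_cast
    rfl

lemma one_mem_gSet {B₁ B₂ : ℝ} (h1 : 1 ≤ B₁) : (1 : ℝ) ∈ gSet B₁ B₂ := by
  refine mem_gSet_of zero_le_one fun e he => ?_
  have hb : ∀ n, pS B₁ B₂ 1 n ≤ 2 := by
    intro n
    calc pS B₁ B₂ 1 n ≤ ∑' u : Fin n → ℕ+, 2 * ENNReal.ofReal
            (1 / ((cK (extW u) n : ℝ) * (cK (extW u) n + cK' (extW u) n))) := by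
          refine ENNReal.tsum_le_tsum fun u => ?_
          rw [contQ_extW]
          have hK := cK_pos' (extW_pos u) n
          have hK' : (cK' (extW u) n : ℝ) ≤ cK (extW u) n := by
            exact_mod_cast cK'_le (extW_pos u) n
          have : (2 : ENNReal) = ENNReal.ofReal 2 := by simp
          rw [this, ← ENNReal.ofReal_mul (by norm_num)]
          apply ENNReal.ofReal_le_ofReal
          have hBn : 1 ≤ B₁ ^ n := one_le_pow₀ h1
          simp only [sub_self, zero_mul, Real.rpow_zero, one_mul, Real.rpow_neg_one]
          rw [mul_one_div, inv_eq_one_div, div_le_div_iff₀ (by positivity) (by positivity)]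
          nlinarith [mul_le_mul_of_nonneg_left hK' hK.le, sq_nonneg (cK (extW u) n : ℝ)]
      _ = 2 * _ := ENNReal.tsum_mul_left
      _ ≤ 2 * 1 := by gcongr; exact sum_cyl n
      _ = 2 := by simp
  have ht : Tendsto (fun n : ℕ => Real.exp (n * e)) atTop atTop :=
    Real.tendsto_exp_atTop.comp (tendsto_natCast_atTop_atTop.atTop_mul_const he)
  filter_upwards [ht.eventually_gt_atTop 2] with n hn
  refine (hb n).trans_lt ?_
  have : (2 : ENNReal) = ENNReal.ofReal 2 := by simp
  rw [this]
  exact (ENNReal.ofReal_lt_ofReal_iff (Real.exp_pos _)).2 hn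

lemma gExp_le_one {B₁ B₂ : ℝ} (h1 : 1 ≤ B₁) : gExp B₁ B₂ ≤ 1 :=
  csInf_le ⟨0, fun _ h => h.1⟩ (one_mem_gSet h1)

lemma gExp_nonneg (B₁ B₂ : ℝ) : 0 ≤ gExp B₁ B₂ :=
  Real.sInf_nonneg fun _ h => h.1

lemma not_mem_of_lt {B₁ B₂ s : ℝ} (h : s < gExp B₁ B₂) : s ∉ gSet B₁ B₂ :=
  fun hs => absurd (csInf_le ⟨0, fun _ h => h.1⟩ hs) (not_le.2 h)

/-- Above the critical exponent the pressure sums are summable. -/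
lemma pS_summable {B₁ B₂ s : ℝ} (h1 : 1 < B₁) (h2 : 1 ≤ B₂) (h : gExp B₁ B₂ < s) :
    ∃ k : ℕ, ∑' n : ℕ, pS B₁ B₂ s (n + k) ≠ ⊤ := by
  obtain ⟨s', hs', hlt⟩ := exists_lt_of_csInf_lt ⟨1, one_mem_gSet h1.le⟩ h
  have hl : 0 < Real.log B₁ := Real.log_pos h1
  set e := (s - s') * Real.log B₁ / 2 with he
  have he0 : 0 < e := by have := sub_pos.2 hlt; positivity
  obtain ⟨k, hk⟩ := eventually_atTop.1 (mem_gSet_eventually hs' he0)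
  refine ⟨k, ?_⟩
  have key : ∀ n, pS B₁ B₂ s n ≤ ENNReal.ofReal (Real.exp (-(2 * e * n))) * pS B₁ B₂ s' n := by
    intro n
    unfold pS
    rw [← ENNReal.tsum_mul_left]
    refine ENNReal.tsum_le_tsum fun u => ?_
    rw [← ENNReal.ofReal_mul (Real.exp_pos _).le, contQ_extW]
    apply ENNReal.ofReal_le_ofReal
    have hK : (1 : ℝ) ≤ cK (extW u) n := by exact_mod_cast cK_pos (extW_pos u) n
    set K : ℝ := ((cK (extW u) n : ℕ) : ℝ)
    have hB : 0 < B₁ := by linarith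
    have hK2 : (1 : ℝ) ≤ K ^ 2 := one_le_pow₀ hK
    have hX : B₁ ^ n ≤ B₁ ^ n * K ^ 2 := le_mul_of_one_le_right (by positivity) hK2
    have hX0 : 0 < B₁ ^ n * K ^ 2 := by positivity
    have e1 : (B₁ ^ n * K ^ 2) ^ (-s) = (B₁ ^ n * K ^ 2) ^ (-(s - s')) * (B₁ ^ n * K ^ 2) ^ (-s') := by
      rw [← Real.rpow_add hX0]; congr 1; ring
    have e2 : (B₁ ^ n * K ^ 2) ^ (-(s - s')) ≤ Real.exp (-(2 * e * n)) := by
      calc (B₁ ^ n * K ^ 2) ^ (-(s - s')) ≤ (B₁ ^ n) ^ (-(s - s')) :=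
            Real.rpow_le_rpow_of_nonpos (by positivity) hX (by linarith)
        _ = Real.exp (-(2 * e * n)) := by
            rw [Real.rpow_def_of_pos (by positivity), Real.log_pow, he]
            congr 1; ring
    have e3 : B₂ ^ ((1 - s) * (n : ℝ)) ≤ B₂ ^ ((1 - s') * (n : ℝ)) := by
      apply Real.rpow_le_rpow_of_exponent_le h2
      have : (0 : ℝ) ≤ n := by positivity
      nlinarith
    rw [e1]
    have : 0 ≤ (B₁ ^ n * K ^ 2) ^ (-s') := by positivity
    have : 0 ≤ B₂ ^ ((1 - s) * (n : ℝ)) := by positivity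
    calc B₂ ^ ((1 - s) * (n : ℝ)) * ((B₁ ^ n * K ^ 2) ^ (-(s - s')) * (B₁ ^ n * K ^ 2) ^ (-s'))
        ≤ B₂ ^ ((1 - s') * (n : ℝ)) * (Real.exp (-(2 * e * n)) * (B₁ ^ n * K ^ 2) ^ (-s')) := by
          gcongr
      _ = _ := by ring
  have hb : ∀ n, pS B₁ B₂ s (n + k) ≤ ENNReal.ofReal (Real.exp (-e) ^ n) := by
    intro n
    refine (key _).trans ?_
    calc _ ≤ ENNReal.ofReal (Real.exp (-(2 * e * (n + k : ℕ)))) *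
          ENNReal.ofReal (Real.exp ((n + k : ℕ) * e)) := by
          gcongr; exact (hk (n + k) (by omega)).le
      _ ≤ _ := by
          rw [← ENNReal.ofReal_mul (Real.exp_pos _).le, ← Real.exp_add, ← Real.exp_nat_mul]
          apply ENNReal.ofReal_le_ofReal
          apply Real.exp_le_exp.2
          push_cast
          have : (0 : ℝ) ≤ k * e := by positivity
          nlinarith
  refine ne_top_of_le_ne_top ?_ (ENNReal.tsum_le_tsum hb)
  have hs : Summable (fun n : ℕ => Real.exp (-e) ^ n) :=
    summable_geometric_of_lt_one (Real.exp_pos _).le (by simpa using he0)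
  rw [← ENNReal.ofReal_tsum_of_nonneg (fun n => by positivity) hs]
  exact ENNReal.ofReal_ne_top


/-! ### Upper bound -/

/-- The set `S_m`. -/
def setS (m : ℕ) (A c : ℕ → ℝ) : Set ℝ := {x : ℝ | x ∈ Set.Ioo (0 : ℝ) 1 ∧ Irrational x ∧
      {n : ℕ | ∀ i < m, c i * A i ^ n ≤ (pq x (n + i) : ℝ) ∧
        (pq x (n + i) : ℝ) < 2 * (c i * A i ^ n)}.Infinite}

/-- `bb A i = A_0 ⋯ A_{i-1}`. -/
noncomputable def bb (A : ℕ → ℝ) (i : ℕ) : ℝ := ∏ j ∈ Finset.range i, A j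

lemma bb_succ (A : ℕ → ℝ) (i : ℕ) : bb A (i + 1) = bb A i * A i := Finset.prod_range_succ _ _

lemma dimNum_eq (A : ℕ → ℝ) (i : ℕ) : dimNum A i = gExp (bb A (i + 1)) (bb A i) := by
  unfold dimNum
  split_ifs with h
  · subst h; rw [sExp_eq]; simp [bb, betaProd]
  · obtain ⟨j, rfl⟩ := Nat.exists_eq_succ_of_ne_zero h; rfl

lemma one_le_bb {A : ℕ → ℝ} {m : ℕ} (hA : ∀ i < m, 1 < A i) {i : ℕ} (hi : i ≤ m) : 1 ≤ bb A i := by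
  unfold bb
  have : ∏ j ∈ Finset.range i, (1 : ℝ) ≤ ∏ j ∈ Finset.range i, A j := by
    apply Finset.prod_le_prod (fun _ _ => zero_le_one)
    intro j hj
    exact (hA j (by have := Finset.mem_range.1 hj; omega)).le
  simpa using this

lemma one_lt_bb {A : ℕ → ℝ} {m : ℕ} (hA : ∀ i < m, 1 < A i) {i : ℕ} (hi : i < m) :
    1 < bb A (i + 1) := by
  rw [bb_succ]
  have := one_le_bb hA hi.le
  have := hA i hi
  nlinarith

/-- Integers in `[X, 2 * X)`. -/
noncomputable def dblIco (X : ℝ) : Finset ℕ := Finset.Ico ⌈X⌉₊ ⌈2 * X⌉₊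

lemma mem_dblIco {X : ℝ} {k : ℕ} : k ∈ dblIco X ↔ X ≤ k ∧ (k : ℝ) < 2 * X := by
  rw [dblIco, Finset.mem_Ico, Nat.ceil_le, Nat.lt_ceil]

lemma card_dblIco_le {X : ℝ} (hX : 0 < X) : ((dblIco X).card : ℝ) ≤ X + 1 := by
  rw [dblIco, Nat.card_Ico]
  have h1 : ⌈X⌉₊ ≤ ⌈2 * X⌉₊ := Nat.ceil_mono (by linarith)
  rw [Nat.cast_sub h1]
  have := Nat.ceil_lt_add_one (show 0 ≤ 2 * X by positivity)
  have := Nat.le_ceil X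
  linarith

lemma card_dblIco_ge {X : ℝ} (hX : 2 ≤ X) : X / 2 ≤ ((dblIco X).card : ℝ) := by
  rw [dblIco, Nat.card_Ico]
  have h1 : ⌈X⌉₊ ≤ ⌈2 * X⌉₊ := Nat.ceil_mono (by linarith)
  rw [Nat.cast_sub h1]
  have := Nat.ceil_lt_add_one (show 0 ≤ X by positivity)
  have := Nat.le_ceil (2 * X)
  linarith

/-- Covering sets. -/
def covSet (i P : ℕ) (X : ℝ) (u : Fin P → ℕ+) (b : Fin i → ℕ) : Set ℝ :=
  {x : ℝ | x ∈ Ioo (0 : ℝ) 1 ∧ Irrational x ∧ (∀ l < P, dig x l = extW u l) ∧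
    (∀ j : Fin i, dig x (P + j) = b j) ∧ X ≤ dig x (P + i)}

lemma covSet_diam {i P : ℕ} {X : ℝ} (hX : 0 < X) {Xs : ℕ → ℝ} (hXs : ∀ j < i, 0 < Xs j)
    (u : Fin P → ℕ+) (b : Fin i → ℕ) (hb : ∀ j : Fin i, Xs j ≤ b j) :
    Metric.ediam (covSet i P X u b) ≤ ENNReal.ofReal
      (1 / (X * (cK (extW u) P : ℝ) ^ 2 * (∏ j ∈ Finset.range i, Xs j) ^ 2)) := by
  refine Metric.ediam_le fun x hx y hy => ?_
  obtain ⟨hx1, hx2, hx3, hx4, hx5⟩ := hx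
  obtain ⟨hy1, hy2, hy3, hy4, hy5⟩ := hy
  rw [edist_dist, Real.dist_eq]
  apply ENNReal.ofReal_le_ofReal
  have hagree : ∀ k < P + i, dig y k = dig x k := by
    intro k hk
    rcases lt_or_ge k P with h | h
    · rw [hx3 k h, hy3 k h]
    · obtain ⟨j, rfl⟩ := Nat.exists_eq_add_of_le h
      have := hx4 ⟨j, by omega⟩
      have := hy4 ⟨j, by omega⟩
      simp_all
  have ex := eq_phi hx1 hx2 (P + i)
  have ey := eq_phi hy1 hy2 (P + i)
  rw [phi_congr (P + i) hagree] at ey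
  have tail : ∀ z, z ∈ Ioo (0 : ℝ) 1 → Irrational z → X ≤ dig z (P + i) →
      0 ≤ gaussMap^[P + i] z ∧ gaussMap^[P + i] z ≤ 1 / X := by
    intro z hz hz2 hz5
    have h0 := (gaussMap_iter_mem hz hz2 (P + i)).1.1
    have h1 := (gaussMap_iter_mem hz hz2 (P + i + 1)).1.1
    refine ⟨h0.le, ?_⟩
    rw [iter_eq hz hz2]
    gcongr
    linarith
  obtain ⟨tx0, tx1⟩ := tail x hx1 hx2 hx5
  obtain ⟨ty0, ty1⟩ := tail y hy1 hy2 hy5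
  have hd := dig_pos hx1 hx2
  have hK : (cK (extW u) P : ℝ) * ∏ j ∈ Finset.range i, Xs j ≤ cK (dig x) (P + i) := by
    have h1 := prod_le_cK_add (dig x) P i
    have h2 : cK (dig x) P = cK (extW u) P := cK_congr P hx3
    rw [h2] at h1
    have h1' : (cK (extW u) P : ℝ) * ∏ j ∈ Finset.range i, (dig x (P + j) : ℝ)
        ≤ cK (dig x) (P + i) := by exact_mod_cast h1
    refine le_trans ?_ h1'
    gcongr with j hj
    · intro j hj; exact (hXs j (Finset.mem_range.1 hj)).le
    · have hj' := Finset.mem_range.1 hj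
      have := hb ⟨j, hj'⟩
      rw [← hx4 ⟨j, hj'⟩] at this
      exact this
  have hY : 0 < ∏ j ∈ Finset.range i, Xs j :=
    Finset.prod_pos fun j hj => hXs j (Finset.mem_range.1 hj)
  have hKu := cK_pos' (extW_pos u) P
  calc |x - y| = |phi (dig x) (P + i) (gaussMap^[P + i] x)
        - phi (dig x) (P + i) (gaussMap^[P + i] y)| := by rw [← ex, ← ey]
    _ ≤ _ := phi_dist_le hd (P + i) tx0 ty0
    _ ≤ (1 / X) / ((cK (extW u) P : ℝ) * ∏ j ∈ Finset.range i, Xs j) ^ 2 := by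
      gcongr
      rw [abs_le]; constructor <;> linarith
    _ = _ := by rw [div_div]; congr 1; ring

lemma upper_aux {m : ℕ} {A c : ℕ → ℝ} (hA : ∀ i < m, 1 < A i) (hc : ∀ i < m, 0 < c i)
    {i : ℕ} (hi : i < m) {s : ℝ} (hs : 0 ≤ s) (h : gExp (bb A (i + 1)) (bb A i) < s) :
    dimH (setS m A c) ≤ ENNReal.ofReal s := by
  have hB1 := one_lt_bb hA hi
  have hB2 := one_le_bb hA hi.le
  obtain ⟨k0, hk0⟩ := pS_summable hB1 hB2 h
  set X : ℕ → ℕ → ℝ := fun P j => (c j * A j) * A j ^ P with hXdef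
  have hcA : ∀ j < m, 0 < c j * A j := fun j hj => mul_pos (hc j hj) (by linarith [hA j hj])
  have hXge : ∀ P, ∀ j < m, c j * A j ≤ X P j := fun P j hj =>
    le_mul_of_one_le_right (hcA j hj).le (one_le_pow₀ (hA j hj).le)
  have hXpos : ∀ P, ∀ j < m, 0 < X P j := fun P j hj => (hcA j hj).trans_le (hXge P j hj)
  let R : ℕ → Finset (Fin i → ℕ) := fun P => Fintype.piFinset (fun j : Fin i => dblIco (X P j))
  let ι : ℕ → Type := fun k => Σ p : ℕ, (Fin (p + (k + k0)) → ℕ+) × ↥(R (p + (k + k0)))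
  let t : ∀ k, ι k → Set ℝ := fun k q =>
    covSet i (q.1 + (k + k0)) (X (q.1 + (k + k0)) i) q.2.1 q.2.2.1
  set Cp := ∏ j ∈ Finset.range i, (c j * A j) with hCp
  have hCp0 : 0 < Cp := Finset.prod_pos fun j hj =>
    hcA j (by have := Finset.mem_range.1 hj; omega)
  have hci := hcA i hi
  have hY : ∀ P, ∏ j ∈ Finset.range i, X P j = Cp * bb A i ^ P := by
    intro P
    rw [hCp, bb, ← Finset.prod_pow, ← Finset.prod_mul_distrib]
  have hdiam : ∀ P (u : Fin P → ℕ+) (b : ↥(R P)), Metric.ediam (covSet i P (X P i) u b.1) ≤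
      ENNReal.ofReal (1 / (X P i * (cK (extW u) P : ℝ) ^ 2 * (Cp * bb A i ^ P) ^ 2)) := by
    intro P u b
    rw [← hY]
    refine covSet_diam (hXpos P i hi) (fun j hj => hXpos P j (hj.trans hi)) u b.1 fun j => ?_
    have := Fintype.mem_piFinset.1 b.2 j
    exact (mem_dblIco.1 this).1
  have hAi := hA i hi
  have hAi0 : 0 < A i := by linarith
  set G := ∏ j ∈ Finset.range i, (1 + 1 / (c j * A j)) with hG
  have hcard : ∀ P, ((R P).card : ℝ) ≤ G * (Cp * bb A i ^ P) := by
    intro P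
    rw [← hY, hG, ← Finset.prod_mul_distrib, Fintype.card_piFinset, Nat.cast_prod,
      Finset.prod_range]
    refine Finset.prod_le_prod (fun _ _ => by positivity) fun j _ => ?_
    have hj : (j : ℕ) < m := j.2.trans hi
    refine (card_dblIco_le (hXpos P j hj)).trans ?_
    have h1 := hXge P j hj
    have h2 := hcA j hj
    have : 1 ≤ 1 / (c j * A j) * X P j := by
      rw [one_div, ← div_eq_inv_mul, le_div_iff₀ h2]; linarith
    linarith
  set C4 := G * Cp * ((c i * A i) * Cp ^ 2) ^ (-s) with hC4
  have hG0 : 0 ≤ G := Finset.prod_nonneg fun j hj => by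
    have := hcA j (by have := Finset.mem_range.1 hj; omega)
    positivity
  have hC40 : 0 ≤ C4 := by positivity
  have hbi0 : 0 < bb A i := by linarith
  have hsumP : ∀ P, ∑' q : (Fin P → ℕ+) × ↥(R P),
      Metric.ediam (covSet i P (X P i) q.1 q.2.1) ^ s ≤
      ENNReal.ofReal C4 * pS (bb A (i + 1)) (bb A i) s P := by
    intro P
    rw [ENNReal.tsum_prod', pS, ← ENNReal.tsum_mul_left]
    refine ENNReal.tsum_le_tsum fun u => ?_
    have hKu := cK_pos' (extW_pos u) P
    have hXi := hXpos P i hi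
    rw [contQ_extW]
    set K : ℝ := ((cK (extW u) P : ℕ) : ℝ) with hK
    calc ∑' b : ↥(R P), Metric.ediam (covSet i P (X P i) u b.1) ^ s
        ≤ ∑' b : ↥(R P), ENNReal.ofReal ((1 / (X P i * K ^ 2 * (Cp * bb A i ^ P) ^ 2)) ^ s) := by
          refine ENNReal.tsum_le_tsum fun b => ?_
          rw [← ENNReal.ofReal_rpow_of_nonneg (by positivity) hs]
          exact ENNReal.rpow_le_rpow (hdiam P u b) hs
      _ = ((R P).card : ENNReal) *
            ENNReal.ofReal ((1 / (X P i * K ^ 2 * (Cp * bb A i ^ P) ^ 2)) ^ s) := by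
          rw [tsum_fintype, Finset.sum_const, Finset.card_univ, Fintype.card_coe, nsmul_eq_mul]
      _ ≤ _ := by
          rw [← ENNReal.ofReal_natCast, ← ENNReal.ofReal_mul (by positivity),
            ← ENNReal.ofReal_mul hC40]
          apply ENNReal.ofReal_le_ofReal
          have e1 : (1 / (X P i * K ^ 2 * (Cp * bb A i ^ P) ^ 2)) ^ s =
              ((c i * A i) * Cp ^ 2) ^ (-s) * (bb A (i + 1) ^ P * K ^ 2) ^ (-s)
                * (bb A i ^ P) ^ (-s) := by
            rw [one_div, Real.inv_rpow (by positivity), ← Real.rpow_neg (by positivity),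
              ← Real.mul_rpow (by positivity) (by positivity),
              ← Real.mul_rpow (by positivity) (by positivity)]
            congr 1
            rw [hXdef, bb_succ, mul_pow]
            ring
          have e2 : bb A i ^ ((1 - s) * (P : ℝ)) = bb A i ^ P * (bb A i ^ P) ^ (-s) := by
            rw [← Real.rpow_natCast, ← Real.rpow_mul hbi0.le, ← Real.rpow_add hbi0]
            congr 1; ring
          rw [e1, e2, hC4]
          calc _ ≤ (G * (Cp * bb A i ^ P)) * _ :=
                mul_le_mul_of_nonneg_right (hcard P) (by positivity)
            _ = _ := by ring
  have hfin : ∀ k, ∑' q : ι k, Metric.ediam (t k q) ^ s ≤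
      ENNReal.ofReal C4 * ∑' n : ℕ, pS (bb A (i + 1)) (bb A i) s (n + k0) := by
    intro k
    rw [ENNReal.tsum_sigma']
    refine (ENNReal.tsum_le_tsum fun p => hsumP (p + (k + k0))).trans ?_
    rw [ENNReal.tsum_mul_left]
    refine mul_le_mul' le_rfl ?_
    have := ENNReal.tsum_comp_le_tsum_of_injective (add_left_injective k)
      (fun n => pS (bb A (i + 1)) (bb A i) s (n + k0))
    simpa [add_assoc] using this
  have hmeas : μH[s] (setS m A c) ≤
      ENNReal.ofReal C4 * ∑' n : ℕ, pS (bb A (i + 1)) (bb A i) s (n + k0) := by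
    have hr : Tendsto (fun k : ℕ => ENNReal.ofReal ((1 / ((c i * A i) * Cp ^ 2)) * (A i)⁻¹ ^ k))
        atTop (nhds 0) := by
      have h1 : Tendsto (fun k : ℕ => (1 / ((c i * A i) * Cp ^ 2)) * (A i)⁻¹ ^ k) atTop
          (nhds ((1 / ((c i * A i) * Cp ^ 2)) * 0)) :=
        (tendsto_pow_atTop_nhds_zero_of_lt_one (by positivity)
          (inv_lt_one_of_one_lt₀ hAi)).const_mul _
      have := ENNReal.tendsto_ofReal h1
      simpa using this
    have hcount : ∀ k, Countable (ι k) := fun k => by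
      change Countable (Σ p : ℕ, (Fin (p + (k + k0)) → ℕ+) × ↥(R (p + (k + k0))))
      infer_instance
    refine (Measure.hausdorffMeasure_le_liminf_tsum s (setS m A c) _ hr t
      (Eventually.of_forall fun k q => ?_) (Eventually.of_forall fun k => ?_)).trans ?_
    · refine (hdiam _ q.2.1 q.2.2).trans (ENNReal.ofReal_le_ofReal ?_)
      have hKu : (1 : ℝ) ≤ cK (extW q.2.1) (q.1 + (k + k0)) := by
        exact_mod_cast cK_pos (extW_pos q.2.1) _
      have h1 : (1 : ℝ) ≤ bb A i ^ (q.1 + (k + k0)) := one_le_pow₀ hB2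
      have h2 : A i ^ k ≤ A i ^ (q.1 + (k + k0)) := pow_le_pow_right₀ hAi.le (by omega)
      rw [inv_pow, ← one_div, div_mul_div_comm, one_mul]
      refine one_div_le_one_div_of_le (by positivity) ?_
      calc (c i * A i) * Cp ^ 2 * A i ^ k = ((c i * A i) * A i ^ k) * 1 ^ 2 * (Cp * 1) ^ 2 := by ring
        _ ≤ _ := by
          simp only [hXdef]
          gcongr
    · intro x hx
      obtain ⟨hx1, hx2, hx3⟩ := hx
      obtain ⟨n, hn, hnk⟩ := hx3.exists_gt (k + k0)
      obtain ⟨p, rfl⟩ : ∃ p, n = p + (k + k0) + 1 := ⟨n - (k + k0) - 1, by omega⟩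
      have hdg : ∀ j < m, X (p + (k + k0)) j ≤ dig x (p + (k + k0) + j) ∧
          (dig x (p + (k + k0) + j) : ℝ) < 2 * X (p + (k + k0)) j := by
        intro j hj
        have := hn j hj
        have e : c j * A j ^ (p + (k + k0) + 1) = X (p + (k + k0)) j := by
          simp only [hXdef]; ring
        have e' : p + (k + k0) + 1 + j = p + (k + k0) + j + 1 := by ring
        rw [e, e'] at this
        exact this
      refine mem_iUnion.2 ⟨⟨p, (fun l => ⟨dig x l, dig_pos hx1 hx2 l⟩),
        ⟨fun j => dig x (p + (k + k0) + j), ?_⟩⟩, hx1, hx2, ?_, ?_, ?_⟩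
      · exact Fintype.mem_piFinset.2 fun j => mem_dblIco.2 (hdg j (j.2.trans hi))
      · intro l hl; simp [extW, hl]
      · intro j; rfl
      · exact (hdg i hi).1
    · refine (liminf_le_liminf (Eventually.of_forall hfin)).trans ?_
      rw [liminf_const]
  have hne : μH[((⟨s, hs⟩ : NNReal) : ℝ)] (setS m A c) ≠ ⊤ :=
    ne_top_of_le_ne_top (ENNReal.mul_ne_top ENNReal.ofReal_ne_top hk0) hmeas
  have := dimH_le_of_hausdorffMeasure_ne_top hne
  rwa [ENNReal.ofReal, Real.toNNReal_of_nonneg hs]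

lemma upper_bound {m : ℕ} {A c : ℕ → ℝ} (hA : ∀ i < m, 1 < A i) (hc : ∀ i < m, 0 < c i)
    {i : ℕ} (hi : i < m) : dimH (setS m A c) ≤ ENNReal.ofReal (dimNum A i) := by
  rw [dimNum_eq]
  have h0 := gExp_nonneg (bb A (i + 1)) (bb A i)
  have hc' : Tendsto (fun k : ℕ => ENNReal.ofReal (gExp (bb A (i + 1)) (bb A i) + 1 / ((k : ℝ) + 1)))
      atTop (nhds (ENNReal.ofReal (gExp (bb A (i + 1)) (bb A i)))) := by
    have := (tendsto_one_div_add_atTop_nhds_zero_nat (𝕜 := ℝ)).const_add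
      (gExp (bb A (i + 1)) (bb A i))
    rw [add_zero] at this
    exact ENNReal.tendsto_ofReal this
  refine ge_of_tendsto' hc' fun k => ?_
  have : (0 : ℝ) < 1 / ((k : ℝ) + 1) := by positivity
  exact upper_aux hA hc hi (by positivity) (by linarith)


section mass
variable {Ω : Type*} [MeasurableSpace Ω]

lemma mass_aux (ν : Measure Ω) {a : Ω → ℕ → ℕ} (h1 : ∀ ω k, 1 ≤ a ω k) {M : ℕ} (hM : 1 ≤ M)
    (hadm : ∀ k, (∀ ω, a ω k ≤ M) ∨ (∀ ω, 2 ≤ a ω k))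
    (hbd : ∀ k, ∃ D, ∀ ω, a ω k ≤ D) {s C : ℝ} (hs : 0 < s) (hC : 0 < C)
    (hA : ∀ ω0 ω1 p, (∀ k < p, a ω1 k = a ω0 k) → a ω0 p < a ω1 p →
      ν {ω | (∀ k < p, a ω k = a ω0 k) ∧ a ω0 p ≤ a ω p ∧ a ω p ≤ a ω1 p} ≤
        ENNReal.ofReal (C * (((a ω1 p : ℝ) - a ω0 p) /
          ((cK (a ω0) p : ℝ) ^ 2 * ((a ω0 p + 1) * (a ω1 p + 1)))) ^ s))
    (hB : ∀ ω0, ν {ω | ∀ k, a ω k = a ω0 k} = 0) (U : Set ℝ) :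
    ν ((fun ω => cF (a ω)) ⁻¹' U) ≤
      ENNReal.ofReal (C * (4 * (M + 1)) ^ s) * Metric.ediam U ^ s := by
  set V := (fun ω => cF (a ω)) ⁻¹' U with hV
  by_cases hsame : ∀ ω ∈ V, ∀ ω' ∈ V, ∀ k, a ω' k = a ω k
  · rcases V.eq_empty_or_nonempty with h | ⟨ω0, h0⟩
    · rw [h]; simp
    · have : ν V = 0 := measure_mono_null (fun ω hω => hsame ω0 h0 ω hω) (hB ω0)
      rw [this]; simp
  · push Not at hsame
    have hex : ∃ p, ∃ ω ∈ V, ∃ ω' ∈ V, a ω' p ≠ a ω p := by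
      obtain ⟨ω, h, ω', h', k, hk⟩ := hsame
      exact ⟨k, ω, h, ω', h', hk⟩
    classical
    set p := Nat.find hex with hp
    obtain ⟨v, hv, v', hv', hne⟩ := Nat.find_spec hex
    have hmin : ∀ k < p, ∀ ω ∈ V, ∀ ω' ∈ V, a ω' k = a ω k := by
      intro k hk ω h ω' h'
      by_contra hc
      exact Nat.find_min hex hk ⟨ω, h, ω', h', hc⟩
    obtain ⟨D, hD⟩ := hbd p
    have hDne : ((fun ω => a ω p) '' V).Nonempty := ⟨_, v, hv, rfl⟩
    have hfin : ((fun ω => a ω p) '' V).Finite :=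
      (Set.finite_Iic D).subset (by rintro _ ⟨ω, _, rfl⟩; exact hD ω)
    obtain ⟨lo, hlo1, hlo2⟩ := Set.exists_min_image _ id hfin hDne
    obtain ⟨hi, hhi1, hhi2⟩ := Set.exists_max_image _ id hfin hDne
    obtain ⟨ω0, h0, rfl⟩ := hlo1
    obtain ⟨ω1, h1v, rfl⟩ := hhi1
    have hlo : ∀ ω ∈ V, a ω0 p ≤ a ω p := fun ω h => hlo2 _ ⟨ω, h, rfl⟩
    have hhi : ∀ ω ∈ V, a ω p ≤ a ω1 p := fun ω h => hhi2 _ ⟨ω, h, rfl⟩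
    have hlt : a ω0 p < a ω1 p := by
      have := hlo v hv; have := hlo v' hv'; have := hhi v hv; have := hhi v' hv'
      change a v' p ≠ a v p at hne
      omega
    have hgap := cF_gap (h1 ω0) (h1 ω1) hM p (fun k hk => hmin k hk ω1 h1v ω0 h0) hlt
      ((hadm (p + 1)).imp (fun h => ⟨h _, h _⟩) (fun h => ⟨h _, h _⟩))
    have hed : ENNReal.ofReal |cF (a ω0) - cF (a ω1)| ≤ Metric.ediam U := by
      rw [← Real.dist_eq, ← edist_dist]
      exact Metric.edist_le_ediam_of_mem h0 h1v
    have hmono : ν V ≤ ν {ω | (∀ k < p, a ω k = a ω0 k) ∧ a ω0 p ≤ a ω p ∧ a ω p ≤ a ω1 p} :=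
      measure_mono fun ω hω => ⟨fun k hk => hmin k hk ω0 h0 ω hω, hlo ω hω, hhi ω hω⟩
    refine (hmono.trans (hA ω0 ω1 p (fun k hk => hmin k hk ω0 h0 ω1 h1v) hlt)).trans ?_
    have hq := cK_pos' (h1 ω0) p
    have hlt' : (a ω0 p : ℝ) < a ω1 p := by exact_mod_cast hlt
    have hM' : (0 : ℝ) ≤ M := by positivity
    have hsub : 0 < (a ω1 p : ℝ) - a ω0 p := by linarith
    have e : ENNReal.ofReal (C * (4 * (M + 1)) ^ s) * Metric.ediam U ^ s ≥
        ENNReal.ofReal (C * (4 * (M + 1)) ^ s) *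
          (ENNReal.ofReal (((a ω1 p : ℝ) - a ω0 p) /
            (4 * (M + 1) * (cK (a ω0) p : ℝ) ^ 2 * ((a ω0 p + 1) * (a ω1 p + 1))))) ^ s := by
      refine mul_le_mul' le_rfl (ENNReal.rpow_le_rpow ?_ hs.le)
      exact (ENNReal.ofReal_le_ofReal hgap).trans hed
    refine le_trans ?_ e
    rw [ENNReal.ofReal_rpow_of_nonneg (by positivity) hs.le, ← ENNReal.ofReal_mul (by positivity)]
    refine ENNReal.ofReal_le_ofReal ?_
    rw [mul_assoc, ← Real.mul_rpow (by positivity) (by positivity)]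
    apply le_of_eq
    congr 2
    field_simp

lemma mass_dist (ν : Measure Ω) [IsProbabilityMeasure ν] {a : Ω → ℕ → ℕ}
    (hmeas : ∀ k, Measurable (fun ω => a ω k)) (h1 : ∀ ω k, 1 ≤ a ω k) {M : ℕ} (hM : 1 ≤ M)
    (hadm : ∀ k, (∀ ω, a ω k ≤ M) ∨ (∀ ω, 2 ≤ a ω k))
    (hbd : ∀ k, ∃ D, ∀ ω, a ω k ≤ D) {s C : ℝ} (hs : 0 < s) (hC : 0 < C)
    (hA : ∀ ω0 ω1 p, (∀ k < p, a ω1 k = a ω0 k) → a ω0 p < a ω1 p →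
      ν {ω | (∀ k < p, a ω k = a ω0 k) ∧ a ω0 p ≤ a ω p ∧ a ω p ≤ a ω1 p} ≤
        ENNReal.ofReal (C * (((a ω1 p : ℝ) - a ω0 p) /
          ((cK (a ω0) p : ℝ) ^ 2 * ((a ω0 p + 1) * (a ω1 p + 1)))) ^ s))
    (hB : ∀ ω0, ν {ω | ∀ k, a ω k = a ω0 k} = 0) (E : Set ℝ) (hE : ∀ ω, cF (a ω) ∈ E) :
    μH[s] E ≠ 0 := by
  have hf : Measurable (fun ω => cF (a ω)) := measurable_cF hmeas h1
  set C' := ENNReal.ofReal (C * (4 * (M + 1)) ^ s) with hC'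
  have hC0 : C' ≠ 0 := by
    rw [hC', Ne, ENNReal.ofReal_eq_zero, not_le]; positivity
  have hCt : C' ≠ ⊤ := ENNReal.ofReal_ne_top
  have key : C'⁻¹ • ν.map (fun ω => cF (a ω)) ≤ μH[s] := by
    refine Measure.le_hausdorffMeasure s _ 1 one_pos fun U _ => ?_
    rw [Measure.smul_apply, smul_eq_mul]
    have h2 : ν.map (fun ω => cF (a ω)) U ≤ C' * Metric.ediam U ^ s := by
      refine (measure_mono subset_closure).trans ?_
      rw [Measure.map_apply hf isClosed_closure.measurableSet, ← Metric.ediam_closure U]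
      exact mass_aux ν h1 hM hadm hbd hs hC hA hB _
    calc C'⁻¹ * _ ≤ C'⁻¹ * (C' * Metric.ediam U ^ s) := mul_le_mul' le_rfl h2
      _ = Metric.ediam U ^ s := by
        rw [← mul_assoc, ENNReal.inv_mul_cancel hC0 hCt, one_mul]
  have h3 := key E
  rw [Measure.smul_apply, smul_eq_mul] at h3
  have h4 : 1 ≤ ν.map (fun ω => cF (a ω)) E := by
    refine le_trans ?_ (Measure.le_map_apply hf.aemeasurable E)
    have : (fun ω => cF (a ω)) ⁻¹' E = univ := eq_univ_of_forall hE
    rw [this, measure_univ]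
  intro h0
  rw [h0] at h3
  have h5 : C'⁻¹ * 1 ≤ 0 := (mul_le_mul' le_rfl h4).trans h3
  rw [mul_one, nonpos_iff_eq_zero, ENNReal.inv_eq_zero] at h5
  exact hCt h5

end mass


/-- The comparison ratios. -/
noncomputable def vt (A : ℕ → ℝ) (s : ℝ) (i : ℕ) : ℝ := bb A (i + 1) ^ s * bb A i ^ (s - 1)

lemma exists_words {m : ℕ} (hm : 1 ≤ m) {A : ℕ → ℝ} (hA : ∀ i < m, 1 < A i) {s : ℝ} (hs : 0 ≤ s)
    (h : ∀ i < m, s < dimNum A i) :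
    ∃ N : ℕ, m ≤ N ∧ ∃ W0 : Finset (Fin N → ℕ), (∀ w ∈ W0, ∀ j, 1 ≤ w j) ∧
      ∀ i < m, 4 * (vt A s i) ^ N < ∑ w ∈ W0, ((contQ N w : ℝ) ^ 2) ^ (-s) := by
  obtain ⟨i, hi, hmax⟩ := Finset.exists_max_image (Finset.range m) (vt A s)
    (Finset.nonempty_range_iff.mpr (by omega))
  rw [Finset.mem_range] at hi
  have hlt := h i hi
  rw [dimNum_eq] at hlt
  obtain ⟨e, he, hf⟩ := not_mem_gSet hs (not_mem_of_lt hlt)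
  have hev : ∀ᶠ n : ℕ in atTop, 4 < Real.exp (n * e) := by
    have : Tendsto (fun n : ℕ => Real.exp (n * e)) atTop atTop :=
      Real.tendsto_exp_atTop.comp (tendsto_natCast_atTop_atTop.atTop_mul_const he)
    exact this.eventually_gt_atTop 4
  obtain ⟨N, hN1, hN2, hN3⟩ := (hf.and_eventually (hev.and (eventually_ge_atTop m))).exists
  have hB1 : 0 < bb A (i + 1) := one_pos.trans (one_lt_bb hA hi)
  have hB2 : 0 < bb A i := one_pos.trans_le (one_le_bb hA hi.le)
  have hv : 0 < vt A s i := by unfold vt; positivity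
  refine ⟨N, hN3, ?_⟩
  have h1 : ENNReal.ofReal 4 < pS (bb A (i + 1)) (bb A i) s N :=
    lt_of_lt_of_le ((ENNReal.ofReal_lt_ofReal_iff (by positivity)).2 hN2) hN1
  rw [pS, ENNReal.tsum_eq_iSup_sum, lt_iSup_iff] at h1
  obtain ⟨F, hF⟩ := h1
  have hterm : ∀ u : Fin N → ℕ+, bb A i ^ ((1 - s) * (N : ℝ)) *
      (bb A (i + 1) ^ N * ((contQ N fun i => (u i : ℕ)) : ℝ) ^ 2) ^ (-s) =
      (vt A s i ^ N)⁻¹ * (((contQ N fun i => (u i : ℕ)) : ℝ) ^ 2) ^ (-s) := by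
    intro u
    rw [Real.mul_rpow (by positivity) (by positivity), ← mul_assoc]
    congr 1
    unfold vt
    rw [mul_pow, mul_inv, ← Real.rpow_natCast, ← Real.rpow_natCast, ← Real.rpow_natCast,
      ← Real.rpow_mul hB1.le, ← Real.rpow_mul hB1.le, ← Real.rpow_mul hB2.le,
      ← Real.rpow_neg hB1.le, ← Real.rpow_neg hB2.le, mul_comm]
    congr 2 <;> ring
  classical
  have hinj : Function.Injective (fun (u : Fin N → ℕ+) (j : Fin N) => (u j : ℕ)) := by
    intro u v huv
    funext j
    exact PNat.eq (congrFun huv j)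
  refine ⟨F.image (fun u j => (u j : ℕ)), ?_, fun k hk => ?_⟩
  · intro w hw j
    obtain ⟨u, _, rfl⟩ := Finset.mem_image.1 hw
    exact (u j).2
  · rw [Finset.sum_image (fun u _ v _ huv => hinj huv)]
    have hk' : vt A s k ≤ vt A s i := hmax k (Finset.mem_range.2 hk)
    have hk0 : 0 ≤ vt A s k := by
      have hB1 : 0 < bb A (k + 1) := one_pos.trans (one_lt_bb hA hk)
      have hB2 : 0 < bb A k := one_pos.trans_le (one_le_bb hA hk.le)
      unfold vt; positivity
    refine lt_of_le_of_lt (mul_le_mul_of_nonneg_left (pow_le_pow_left₀ hk0 hk' N) (by norm_num)) ?_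
    simp_rw [hterm] at hF
    rw [← ENNReal.ofReal_sum_of_nonneg (fun u _ => by positivity), ← Finset.mul_sum] at hF
    have := (ENNReal.ofReal_lt_ofReal_iff_of_nonneg (by norm_num)).1 hF
    rwa [inv_mul_eq_div, lt_div_iff₀ (by positivity)] at this

open Classical in
/-- The greedy schedule. -/
noncomputable def schedH (P : ℕ → ℝ → Prop) (z : ℝ) : ℕ → ℝ
  | 0 => 1
  | (t + 1) => if P t (schedH P z t) then 1 else schedH P z t * z

lemma exists_sched {m : ℕ} {κ r : ℕ → ℝ} {z : ℝ} (hz : 1 ≤ z)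
    (hr : ∀ i < m, 0 < r i ∧ r i < z) (T0 : ℕ) :
    ∃ (big : ℕ → Prop) (H : ℕ → ℝ), H 0 = 1 ∧ (∀ t, 1 ≤ H t) ∧
      (∀ t, big t → H (t + 1) = 1) ∧ (∀ t, ¬ big t → H (t + 1) = H t * z) ∧
      (∀ t, big t → T0 ≤ t ∧ ∀ i < m, κ i * r i ^ t ≤ H t) ∧ (∀ n, ∃ t, n ≤ t ∧ big t) := by
  set P : ℕ → ℝ → Prop := fun t h => T0 ≤ t ∧ ∀ i < m, κ i * r i ^ t ≤ h with hP
  set H := schedH P z with hH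
  have hb : ∀ t, P t (H t) → H (t + 1) = 1 := fun t ht => if_pos ht
  have hnb : ∀ t, ¬ P t (H t) → H (t + 1) = H t * z := fun t ht => if_neg ht
  have h1 : ∀ t, 1 ≤ H t := by
    intro t
    induction t with
    | zero => exact le_rfl
    | succ t ih =>
      by_cases ht : P t (H t)
      · rw [hb t ht]
      · rw [hnb t ht]; nlinarith
  refine ⟨fun t => P t (H t), H, rfl, h1, hb, hnb, fun t ht => ht, fun n => ?_⟩
  by_contra hc
  push Not at hc
  have hgrow : ∀ j, z ^ j ≤ H (n + j) := by
    intro j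
    induction j with
    | zero => simpa using h1 n
    | succ j ih =>
      rw [← add_assoc, hnb _ (hc _ (by omega)), pow_succ]
      exact mul_le_mul_of_nonneg_right ih (by linarith)
  have hev : ∀ i ∈ Finset.range m, ∀ᶠ j : ℕ in atTop, κ i * r i ^ (n + j) ≤ z ^ j := by
    intro i hi
    obtain ⟨hr0, hrz⟩ := hr i (Finset.mem_range.1 hi)
    have hz0 : 0 < z := by linarith
    have ht : Tendsto (fun j : ℕ => (κ i * r i ^ n) * (r i / z) ^ j) atTop (nhds 0) := by
      have := (tendsto_pow_atTop_nhds_zero_of_lt_one (by positivity)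
        ((div_lt_one hz0).2 hrz)).const_mul (κ i * r i ^ n)
      simpa using this
    filter_upwards [ht.eventually_lt_const one_pos] with j hj
    rw [div_pow, ← mul_div_assoc, div_lt_one (by positivity)] at hj
    rw [pow_add, ← mul_assoc]; exact hj.le
  rw [← Finset.eventually_all] at hev
  obtain ⟨j, hj1, hj2⟩ := (hev.and (eventually_ge_atTop T0)).exists
  exact hc (n + j) (by omega) ⟨by omega, fun i hi => (hj1 i (Finset.mem_range.2 hi)).trans (hgrow j)⟩


/-- The data of the Cantor construction. -/
structure Setup where
  m : ℕ
  N : ℕ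
  M : ℕ
  X : ℕ → ℕ → ℝ
  s : ℝ
  z : ℝ
  W0 : Finset (Fin N → ℕ)
  big : ℕ → Prop
  H : ℕ → ℝ
  hm : 1 ≤ m
  hmN : m ≤ N
  hM : 1 ≤ M
  hs0 : 0 < s
  hs1 : s ≤ 1
  hz : 1 ≤ z
  hW1 : ∀ w ∈ W0, ∀ j, 1 ≤ w j
  hWM : ∀ w ∈ W0, ∀ j, w j ≤ M
  hWz : ∑ w ∈ W0, ((contQ N w : ℝ) ^ 2) ^ (-s) = 4 * z
  hX : ∀ t, big t → ∀ j < m, 2 ≤ X t j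
  hH0 : H 0 = 1
  hH1 : ∀ t, 1 ≤ H t
  hHb : ∀ t, big t → H (t + 1) = 1
  hHn : ∀ t, ¬ big t → H (t + 1) = H t * z
  hHX : ∀ t, big t → ∀ i < m, (2 ^ m * (3 ^ m * 2 ^ N) ^ 2) *
    ((∏ j ∈ Finset.range (i + 1), X t j) ^ s * (∏ j ∈ Finset.range i, X t j) ^ (s - 1)) ≤ H t

namespace Setup
variable (S : Setup)

lemma hN : 0 < S.N := lt_of_lt_of_le S.hm S.hmN

noncomputable def R (t : ℕ) (j : Fin S.N) : Finset ℕ :=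
  if (j : ℕ) < S.m then dblIco (S.X t j) else {1}

open Classical in
noncomputable def W (t : ℕ) : Finset (Fin S.N → ℕ) :=
  if S.big t then Fintype.piFinset (S.R t) else S.W0

open Classical in
noncomputable def p (t : ℕ) (w : Fin S.N → ℕ) : ℝ :=
  if S.big t then 1 / ((S.W t).card : ℝ) else ((contQ S.N w : ℝ) ^ 2) ^ (-S.s) / (4 * S.z)

lemma W_big {t : ℕ} (h : S.big t) : S.W t = Fintype.piFinset (S.R t) := if_pos h
lemma W_nbig {t : ℕ} (h : ¬ S.big t) : S.W t = S.W0 := if_neg h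
lemma p_big {t : ℕ} (h : S.big t) (w) : S.p t w = 1 / ((S.W t).card : ℝ) := if_pos h
lemma p_nbig {t : ℕ} (h : ¬ S.big t) (w) :
    S.p t w = ((contQ S.N w : ℝ) ^ 2) ^ (-S.s) / (4 * S.z) := if_neg h

lemma p_nonneg (t w) : 0 ≤ S.p t w := by
  have := S.hz
  by_cases h : S.big t
  · rw [p_big S h]; positivity
  · rw [p_nbig S h]; positivity

lemma R_card_ge {t : ℕ} (h : S.big t) (j : Fin S.N) (hj : (j : ℕ) < S.m) :
    S.X t j / 2 ≤ ((S.R t j).card : ℝ) := by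
  rw [R, if_pos hj]
  exact card_dblIco_ge (S.hX t h j hj)

lemma R_card_pos {t : ℕ} (h : S.big t) (j : Fin S.N) : (0 : ℝ) < (S.R t j).card := by
  by_cases hj : (j : ℕ) < S.m
  · have := S.hX t h j hj
    have := S.R_card_ge h j hj
    linarith
  · simp [R, if_neg hj]

lemma W_card {t : ℕ} (h : S.big t) : ((S.W t).card : ℝ) = ∏ j, ((S.R t j).card : ℝ) := by
  rw [W_big S h, Fintype.card_piFinset]; push_cast; rfl

lemma W_card_pos {t : ℕ} (h : S.big t) : (0 : ℝ) < (S.W t).card := by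
  rw [W_card S h]; exact Finset.prod_pos fun j _ => S.R_card_pos h j

lemma p_sum (t : ℕ) : ∑ w ∈ S.W t, S.p t w = 1 := by
  have hz := S.hz
  by_cases h : S.big t
  · simp_rw [p_big S h]
    rw [Finset.sum_const, nsmul_eq_mul, mul_one_div_cancel (S.W_card_pos h).ne']
  · simp_rw [p_nbig S h]
    rw [← Finset.sum_div, W_nbig S h, S.hWz, div_self (by positivity)]

noncomputable def pmf (t : ℕ) : PMF ↥(S.W t) :=
  PMF.ofFintype (fun w => ENNReal.ofReal (S.p t w)) (by
    rw [Finset.sum_coe_sort (S.W t) (fun w => ENNReal.ofReal (S.p t w)),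
      ← ENNReal.ofReal_sum_of_nonneg (fun w _ => S.p_nonneg t w), p_sum, ENNReal.ofReal_one])

noncomputable def mu (t : ℕ) : Measure ↥(S.W t) := (S.pmf t).toMeasure

instance (t : ℕ) : IsProbabilityMeasure (S.mu t) := by unfold mu; infer_instance

lemma mu_singleton (t : ℕ) (w : ↥(S.W t)) : S.mu t {w} = ENNReal.ofReal (S.p t w) := by
  unfold mu
  rw [PMF.toMeasure_apply_singleton _ _ (MeasurableSet.singleton _)]
  rfl

abbrev Om := ∀ t, ↥(S.W t)

noncomputable def nu : Measure S.Om := Measure.infinitePi S.mu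

instance : IsProbabilityMeasure S.nu := by unfold nu; infer_instance

lemma nu_cyl (ω0 : S.Om) (T : ℕ) : S.nu {ω | ∀ t < T, ω t = ω0 t} =
    ENNReal.ofReal (∏ t ∈ Finset.range T, S.p t (ω0 t)) := by
  have e : {ω : S.Om | ∀ t < T, ω t = ω0 t} = Set.pi (Finset.range T) (fun t => {ω0 t}) := by
    ext ω; simp [Set.mem_pi]
  rw [e, nu, Measure.infinitePi_pi _ (fun _ _ => MeasurableSet.singleton _)]
  rw [ENNReal.ofReal_prod_of_nonneg (fun t _ => S.p_nonneg _ _)]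
  exact Finset.prod_congr rfl fun t _ => S.mu_singleton t _

lemma nu_cyl' (ω0 : S.Om) (T : ℕ) (V : Set ↥(S.W T)) :
    S.nu {ω | (∀ t < T, ω t = ω0 t) ∧ ω T ∈ V} =
    ENNReal.ofReal (∏ t ∈ Finset.range T, S.p t (ω0 t)) * S.mu T V := by
  classical
  have hd : ∀ t, MeasurableSet ((Function.update (fun t => ({ω0 t} : Set ↥(S.W t))) T V) t) :=
    fun t => (Set.toFinite _).measurableSet
  have e : {ω : S.Om | (∀ t < T, ω t = ω0 t) ∧ ω T ∈ V} = Set.pi (Finset.range (T + 1))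
      (Function.update (fun t => {ω0 t}) T V) := by
    ext ω
    simp only [Set.mem_pi, Set.mem_ofPred_eq, Finset.coe_range, mem_Iio, Nat.lt_succ_iff]
    constructor
    · rintro ⟨h1, h2⟩ t ht
      rcases ht.lt_or_eq with h | rfl
      · rw [Function.update_of_ne h.ne]; exact h1 t h
      · simpa using h2
    · intro h
      refine ⟨fun t ht => ?_, by simpa using h T le_rfl⟩
      have := h t ht.le
      rwa [Function.update_of_ne ht.ne] at this
  rw [e, nu, Measure.infinitePi_pi _ (fun _ _ => hd _), Finset.prod_range_succ]
  rw [ENNReal.ofReal_prod_of_nonneg (fun t _ => S.p_nonneg _ _)]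
  congr 1
  · refine Finset.prod_congr rfl fun t ht => ?_
    rw [Function.update_of_ne (Finset.mem_range.1 ht).ne, S.mu_singleton]
  · simp

/-- Digits. -/
def dg (ω : S.Om) (k : ℕ) : ℕ := (ω (k / S.N)).1 ⟨k % S.N, Nat.mod_lt _ S.hN⟩

lemma dg_add (ω : S.Om) (t i : ℕ) (hi : i < S.N) : S.dg ω (t * S.N + i) = (ω t).1 ⟨i, hi⟩ := by
  have key : ∀ u (hu : u = t) i' (hi' : i' = i) (hl : i' < S.N),
      (ω u).1 ⟨i', hl⟩ = (ω t).1 ⟨i, hi⟩ := by rintro u rfl i' rfl hl; rfl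
  refine key _ ?_ _ ?_ _
  · rw [mul_comm, Nat.mul_add_div S.hN, Nat.div_eq_of_lt hi, add_zero]
  · rw [mul_comm, Nat.mul_add_mod, Nat.mod_eq_of_lt hi]

lemma exists_pos (k : ℕ) : ∃ t i, i < S.N ∧ k = t * S.N + i :=
  ⟨k / S.N, k % S.N, Nat.mod_lt _ S.hN, (Nat.div_add_mod' k S.N).symm⟩

lemma dg_measurable (k : ℕ) : Measurable (fun ω => S.dg ω k) := by
  unfold dg
  exact (measurable_pi_apply _).comp (measurable_subtype_coe.comp (measurable_pi_apply _))

lemma mem_of_big {t : ℕ} {w : Fin S.N → ℕ} (hw : w ∈ S.W t) (h : S.big t) :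
    ∀ j, w j ∈ S.R t j := by
  rwa [S.W_big h, Fintype.mem_piFinset] at hw

lemma mem_of_nbig {t : ℕ} {w : Fin S.N → ℕ} (hw : w ∈ S.W t) (h : ¬ S.big t) :
    w ∈ S.W0 := by
  rwa [S.W_nbig h] at hw

lemma dg_big (ω : S.Om) {t : ℕ} (h : S.big t) {i : ℕ} (hi : i < S.m) :
    S.X t i ≤ S.dg ω (t * S.N + i) ∧ (S.dg ω (t * S.N + i) : ℝ) < 2 * S.X t i := by
  rw [S.dg_add ω t i (hi.trans_le S.hmN)]
  have := S.mem_of_big (ω t).2 h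
  have := this ⟨i, hi.trans_le S.hmN⟩
  rw [R, if_pos hi] at this
  exact mem_dblIco.1 this

lemma dg_big_one (ω : S.Om) {t : ℕ} (h : S.big t) {i : ℕ} (hi : S.m ≤ i) (hi' : i < S.N) :
    S.dg ω (t * S.N + i) = 1 := by
  rw [S.dg_add ω t i hi']
  have := S.mem_of_big (ω t).2 h
  have := this ⟨i, hi'⟩
  rw [R, if_neg (not_lt.2 hi)] at this
  simpa using this

lemma dg_nbig (ω : S.Om) {t : ℕ} (h : ¬ S.big t) {i : ℕ} (hi : i < S.N) :
    1 ≤ S.dg ω (t * S.N + i) ∧ S.dg ω (t * S.N + i) ≤ S.M := by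
  rw [S.dg_add ω t i hi]
  have := S.mem_of_nbig (ω t).2 h
  exact ⟨S.hW1 _ this _, S.hWM _ this _⟩

lemma dg_big_two (ω : S.Om) {t : ℕ} (h : S.big t) {i : ℕ} (hi : i < S.m) :
    2 ≤ S.dg ω (t * S.N + i) := by
  have h1 := (S.dg_big ω h hi).1
  have h2 := S.hX t h i hi
  exact_mod_cast h2.trans h1

lemma dg_pos (ω : S.Om) (k : ℕ) : 1 ≤ S.dg ω k := by
  obtain ⟨t, i, hi, rfl⟩ := S.exists_pos k
  by_cases h : S.big t
  · by_cases hm : i < S.m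
    · exact one_le_two.trans (S.dg_big_two ω h hm)
    · rw [S.dg_big_one ω h (not_lt.1 hm) hi]
  · exact (S.dg_nbig ω h hi).1

lemma dg_adm (k : ℕ) : (∀ ω, S.dg ω k ≤ S.M) ∨ (∀ ω, 2 ≤ S.dg ω k) := by
  obtain ⟨t, i, hi, rfl⟩ := S.exists_pos k
  by_cases h : S.big t
  · by_cases hm : i < S.m
    · exact Or.inr fun ω => S.dg_big_two ω h hm
    · exact Or.inl fun ω => by rw [S.dg_big_one ω h (not_lt.1 hm) hi]; exact S.hM
  · exact Or.inl fun ω => (S.dg_nbig ω h hi).2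

lemma dg_bdd (k : ℕ) : ∃ D, ∀ ω, S.dg ω k ≤ D := by
  obtain ⟨t, i, hi, rfl⟩ := S.exists_pos k
  refine ⟨(S.W t).sup (fun w => w ⟨i, hi⟩), fun ω => ?_⟩
  rw [S.dg_add ω t i hi]
  exact Finset.le_sup (f := fun w : Fin S.N → ℕ => w ⟨i, hi⟩) (ω t).2

lemma agree {ω ω0 : S.Om} {T : ℕ} (h : ∀ k < T * S.N, S.dg ω k = S.dg ω0 k) :
    ∀ t < T, ω t = ω0 t := by
  intro t ht
  ext i
  have h1 : t * S.N + i < T * S.N := by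
    have := i.2
    nlinarith
  have := h _ h1
  rwa [S.dg_add _ _ _ i.2, S.dg_add _ _ _ i.2] at this

lemma contQ_dg (ω : S.Om) (t : ℕ) :
    contQ S.N (ω t).1 = cK (fun j => S.dg ω (t * S.N + j)) S.N := by
  rw [← contQ_eq]
  congr 1
  funext i
  exact (S.dg_add ω t i i.2).symm

end Setup


namespace Setup
variable (S : Setup)

noncomputable def Y (t i : ℕ) : ℝ := ∏ j ∈ Finset.range i, S.X t j

lemma Y_succ (t i : ℕ) : S.Y t (i + 1) = S.Y t i * S.X t i := Finset.prod_range_succ _ _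

lemma Y_ge_one {t : ℕ} (h : S.big t) {i : ℕ} (hi : i ≤ S.m) : 1 ≤ S.Y t i := by
  induction i with
  | zero => simp [Y]
  | succ i ih =>
    rw [Y_succ]
    have := ih (by omega)
    have := S.hX t h i hi
    nlinarith

lemma cK_big (ω : S.Om) {t : ℕ} (h : S.big t) {i : ℕ} (hi : i ≤ S.m) :
    (cK (S.dg ω) (t * S.N + i) : ℝ) ≤ cK (S.dg ω) (t * S.N) * (3 ^ i * S.Y t i) := by
  induction i with
  | zero => simp [Y]
  | succ i ih =>
    have ih := ih (by omega)
    have h1 : (cK (S.dg ω) (t * S.N + i + 1) : ℝ) ≤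
        cK (S.dg ω) (t * S.N + i) * (S.dg ω (t * S.N + i) + 1) := by
      exact_mod_cast cK_succ_le (S.dg_pos ω) (t * S.N + i)
    have h2 := (S.dg_big ω h (i := i) hi).2
    have h3 := S.hX t h i hi
    have h4 := S.Y_ge_one h (i := i) (by omega)
    have h0 := cK_pos' (S.dg_pos ω) (t * S.N)
    calc (cK (S.dg ω) (t * S.N + (i + 1)) : ℝ) ≤ _ := h1
      _ ≤ (cK (S.dg ω) (t * S.N) * (3 ^ i * S.Y t i)) * (3 * S.X t i) := by
        gcongr
        linarith
      _ = _ := by rw [Y_succ]; ring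

lemma cK_block (ω : S.Om) {t : ℕ} (h : S.big t) :
    (cK (S.dg ω) ((t + 1) * S.N) : ℝ) ≤
      cK (S.dg ω) (t * S.N) * ((3 ^ S.m * 2 ^ S.N) * S.Y t S.m) := by
  have h1 := cK_add_le_prod (S.dg_pos ω) (t * S.N + S.m) (S.N - S.m)
  have e : t * S.N + S.m + (S.N - S.m) = (t + 1) * S.N := by
    have := S.hmN
    rw [add_mul]; omega
  rw [e] at h1
  have h2 : ∏ j ∈ Finset.range (S.N - S.m), (S.dg ω (t * S.N + S.m + j) + 1) =
      2 ^ (S.N - S.m) := by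
    rw [Finset.prod_congr rfl (g := fun _ => 2)]
    · simp
    · intro j hj
      rw [Finset.mem_range] at hj
      rw [add_assoc, S.dg_big_one ω h (by omega) (by omega)]
  rw [h2] at h1
  have h3 : (cK (S.dg ω) ((t + 1) * S.N) : ℝ) ≤
      cK (S.dg ω) (t * S.N + S.m) * 2 ^ (S.N - S.m) := by exact_mod_cast h1
  have h4 := S.Y_ge_one h (i := S.m) le_rfl
  have h0 := cK_pos' (S.dg_pos ω) (t * S.N)
  calc _ ≤ _ := h3
    _ ≤ (cK (S.dg ω) (t * S.N) * (3 ^ S.m * S.Y t S.m)) * 2 ^ S.N := by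
      gcongr
      · exact S.cK_big ω h le_rfl
      · norm_num
      · omega
    _ = _ := by ring

lemma prod_R_ge {t : ℕ} (h : S.big t) {i : ℕ} (hi : i ≤ S.m) :
    S.Y t i / 2 ^ i ≤ ∏ j : Fin S.N, if (j : ℕ) < i then ((S.R t j).card : ℝ) else 1 := by
  have e : (∏ j : Fin S.N, if (j : ℕ) < i then S.X t j / 2 else 1) = S.Y t i / 2 ^ i := by
    rw [Fin.prod_univ_eq_prod_range (fun j => if j < i then S.X t j / 2 else 1) S.N,
      Finset.prod_ite, Finset.prod_const_one, mul_one, Y]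
    have : {x ∈ Finset.range S.N | x < i} = Finset.range i := by
      ext x; simp; have := S.hmN; omega
    rw [this, Finset.prod_div_distrib]; simp
  rw [← e]
  refine Finset.prod_le_prod (fun j _ => ?_) (fun j _ => ?_)
  · split_ifs with hj
    · have := S.hX t h j (by omega); positivity
    · exact zero_le_one
  · split_ifs with hj
    · exact S.R_card_ge h j (by omega)
    · exact le_rfl

lemma W_card_ge {t : ℕ} (h : S.big t) : S.Y t S.m / 2 ^ S.m ≤ ((S.W t).card : ℝ) := by
  refine (S.prod_R_ge h le_rfl).trans (le_of_eq ?_)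
  rw [S.W_card h]
  refine Finset.prod_congr rfl fun j _ => ?_
  split_ifs with hj
  · rfl
  · simp [R, if_neg hj]

lemma E1 (ω : S.Om) (T : ℕ) : ∏ t ∈ Finset.range T, S.p t (ω t) ≤
    ((cK (S.dg ω) (T * S.N) : ℝ) ^ 2) ^ (-S.s) / S.H T := by
  have hs0 := S.hs0
  have hs1 := S.hs1
  have hz := S.hz
  induction T with
  | zero => simp [S.hH0, cK]
  | succ T ih =>
    rw [Finset.prod_range_succ]
    have hq := cK_pos' (S.dg_pos ω) (T * S.N)
    have hq' := cK_pos' (S.dg_pos ω) ((T + 1) * S.N)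
    have hH := S.hH1 T
    refine (mul_le_mul_of_nonneg_right ih (S.p_nonneg _ _)).trans ?_
    by_cases h : S.big T
    · rw [S.p_big h, S.hHb T h, div_one]
      set q : ℝ := (cK (S.dg ω) (T * S.N) : ℝ)
      have hY := S.Y_ge_one h (i := S.m) le_rfl
      set D : ℝ := 3 ^ S.m * 2 ^ S.N with hD
      have hD1 : 1 ≤ D := by
        rw [hD]; exact one_le_mul_of_one_le_of_one_le (one_le_pow₀ (by norm_num)) (one_le_pow₀ (by norm_num))
      have h1 : ((q * (D * S.Y T S.m)) ^ 2) ^ (-S.s) ≤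
          ((cK (S.dg ω) ((T + 1) * S.N) : ℝ) ^ 2) ^ (-S.s) := by
        refine Real.rpow_le_rpow_of_nonpos (by positivity) ?_ (by linarith)
        have := S.cK_block ω h
        gcongr
      refine le_trans ?_ h1
      rw [mul_pow, Real.mul_rpow (by positivity) (by positivity), div_mul_eq_mul_div, mul_one_div,
        div_div]
      rw [div_eq_mul_inv]
      refine mul_le_mul_of_nonneg_left ?_ (by positivity)
      rw [Real.rpow_neg (by positivity)]
      refine inv_anti₀ (by positivity) ?_
      have hW := S.W_card_ge h
      obtain ⟨m', hm'⟩ : ∃ m', S.m = m' + 1 := ⟨S.m - 1, by have := S.hm; omega⟩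
      have h2 := S.hHX T h m' (by omega)
      have e1 : ∏ j ∈ Finset.range (m' + 1), S.X T j = S.Y T S.m := by rw [hm']; rfl
      have e2 : ∏ j ∈ Finset.range m', S.X T j = S.Y T m' := rfl
      rw [e1, e2] at h2
      have hY' := S.Y_ge_one h (i := m') (by omega)
      have hYY : S.Y T m' ≤ S.Y T S.m := by
        rw [hm', Y_succ]
        have := S.hX T h m' (by omega)
        nlinarith
      have h3 : S.Y T S.m ^ (S.s - 1) ≤ S.Y T m' ^ (S.s - 1) :=
        Real.rpow_le_rpow_of_nonpos (by linarith) hYY (by linarith)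
      set y := S.Y T S.m
      have h4 : ((D * y) ^ 2) ^ S.s ≤ D ^ 2 * (y ^ S.s * y ^ S.s) := by
        rw [mul_pow, Real.mul_rpow (by positivity) (by positivity)]
        rw [sq y, Real.mul_rpow (by positivity) (by positivity)]
        refine mul_le_mul_of_nonneg_right ?_ (by positivity)
        calc (D ^ 2) ^ S.s ≤ (D ^ 2) ^ (1 : ℝ) :=
              Real.rpow_le_rpow_of_exponent_le (one_le_pow₀ hD1) hs1
          _ = _ := Real.rpow_one _
      have h5 : y ^ S.s = y ^ (S.s - 1) * y := by
        rw [Real.rpow_sub_one (by positivity)]; field_simp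
      calc ((D * y) ^ 2) ^ S.s ≤ D ^ 2 * (y ^ S.s * y ^ S.s) := h4
        _ = (2 ^ S.m * D ^ 2 * (y ^ S.s * y ^ (S.s - 1))) * (y / 2 ^ S.m) := by
          nth_rewrite 2 [h5]; field_simp
        _ ≤ (2 ^ S.m * D ^ 2 * (y ^ S.s * S.Y T m' ^ (S.s - 1))) * (y / 2 ^ S.m) := by
          gcongr
        _ ≤ S.H T * (S.W T).card := by gcongr
        _ = _ := mul_comm _ _
    · rw [S.p_nbig h, S.hHn T h, S.contQ_dg]
      set q : ℝ := (cK (S.dg ω) (T * S.N) : ℝ)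
      set r : ℝ := (cK (fun j => S.dg ω (T * S.N + j)) S.N : ℝ)
      have hr : 0 < r := cK_pos' (fun j => S.dg_pos ω _) _
      have h0 : (cK (S.dg ω) ((T + 1) * S.N) : ℝ) ≤ 2 * (q * r) := by
        rw [add_mul, one_mul]
        have := Nat.cast_le (α := ℝ) |>.2 (cK_add_le (S.dg_pos ω) (T * S.N) S.N)
        push_cast at this
        exact this
      have h1 : ((2 * (q * r)) ^ 2) ^ (-S.s) ≤
          ((cK (S.dg ω) ((T + 1) * S.N) : ℝ) ^ 2) ^ (-S.s) := by
        refine Real.rpow_le_rpow_of_nonpos (by positivity) ?_ (by linarith)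
        gcongr
      have e : (2 * (q * r)) ^ 2 = 4 * (q ^ 2 * r ^ 2) := by ring
      rw [e, Real.mul_rpow (by positivity) (by positivity),
        Real.mul_rpow (by positivity) (by positivity)] at h1
      have h4 : (4 : ℝ)⁻¹ ≤ 4 ^ (-S.s) := by
        rw [← Real.rpow_neg_one]
        exact Real.rpow_le_rpow_of_exponent_le (by norm_num) (by linarith)
      have hq2 : 0 ≤ (q ^ 2) ^ (-S.s) := by positivity
      have hr2 : 0 ≤ (r ^ 2) ^ (-S.s) := by positivity
      calc (q ^ 2) ^ (-S.s) / S.H T * ((r ^ 2) ^ (-S.s) / (4 * S.z))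
          = (4⁻¹ * ((q ^ 2) ^ (-S.s) * (r ^ 2) ^ (-S.s))) / (S.H T * S.z) := by field_simp
        _ ≤ (4 ^ (-S.s) * ((q ^ 2) ^ (-S.s) * (r ^ 2) ^ (-S.s))) / (S.H T * S.z) := by gcongr
        _ ≤ _ := by gcongr

lemma E1' (ω : S.Om) (T : ℕ) : ∏ t ∈ Finset.range T, S.p t (ω t) ≤
    ((cK (S.dg ω) (T * S.N) : ℝ) ^ 2) ^ (-S.s) := by
  refine (S.E1 ω T).trans (div_le_self (by positivity) (S.hH1 T))

lemma partB (ω0 : S.Om) : S.nu {ω | ∀ k, S.dg ω k = S.dg ω0 k} = 0 := by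
  have hb : ∀ T : ℕ, S.nu {ω | ∀ k, S.dg ω k = S.dg ω0 k} ≤
      ENNReal.ofReal ((((T : ℝ) + 1) ^ 2) ^ (-S.s)) := by
    intro T
    have h1 : S.nu {ω | ∀ k, S.dg ω k = S.dg ω0 k} ≤ S.nu {ω | ∀ t < T + 1, ω t = ω0 t} :=
      measure_mono fun ω hω => S.agree fun k _ => hω k
    refine h1.trans ?_
    rw [S.nu_cyl]
    refine ENNReal.ofReal_le_ofReal ((S.E1' ω0 (T + 1)).trans ?_)
    refine Real.rpow_le_rpow_of_nonpos (by positivity) ?_ (by linarith [S.hs0])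
    have h2 : T + 1 ≤ cK (S.dg ω0) ((T + 1) * S.N) := by
      refine le_trans ?_ (cK_ge (S.dg_pos ω0) _)
      have := S.hN
      nlinarith
    have h3 : (T : ℝ) + 1 ≤ cK (S.dg ω0) ((T + 1) * S.N) := by exact_mod_cast h2
    gcongr
  have ht : Tendsto (fun T : ℕ => ENNReal.ofReal ((((T : ℝ) + 1) ^ 2) ^ (-S.s))) atTop
      (nhds 0) := by
    have h1 : Tendsto (fun T : ℕ => ((T : ℝ) + 1) ^ 2) atTop atTop :=
      (tendsto_pow_atTop (by norm_num)).comp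
        (tendsto_atTop_add_const_right _ _ tendsto_natCast_atTop_atTop)
    have := ENNReal.tendsto_ofReal ((tendsto_rpow_neg_atTop S.hs0).comp h1)
    simpa using this
  exact nonpos_iff_eq_zero.1 (ge_of_tendsto' ht hb)

end Setup


namespace Setup
variable (S : Setup)

lemma card_big {T : ℕ} (h : S.big T) {i : ℕ} (hi : i < S.m) (b : Fin S.N → ℕ) {lo hi' : ℕ}
    (hlt : lo < hi') (F : Finset (Fin S.N → ℕ)) (hF : ∀ w ∈ F, w ∈ S.W T ∧
      (∀ j : Fin S.N, (j : ℕ) < i → w j = b j) ∧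
      ∀ j : Fin S.N, (j : ℕ) = i → lo ≤ w j ∧ w j ≤ hi') :
    (F.card : ℝ) ≤ (S.W T).card * (2 ^ (i + 2) * ((hi' : ℝ) - lo) / S.Y T (i + 1)) := by
  classical
  have hiN : i < S.N := hi.trans_le S.hmN
  set R' : Fin S.N → Finset ℕ := fun j => if (j : ℕ) < i then {b j} else
    if (j : ℕ) = i then Finset.Icc lo hi' else S.R T j with hR'
  have hsub : F ⊆ Fintype.piFinset R' := by
    intro w hw
    obtain ⟨h1, h2, h3⟩ := hF w hw
    have h4 := S.mem_of_big h1 h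
    rw [Fintype.mem_piFinset]
    intro j
    simp only [hR']
    split_ifs with hj hj'
    · simp [h2 j hj]
    · simpa using h3 j hj'
    · exact h4 j
  have hcard : (F.card : ℝ) ≤ ∏ j, ((R' j).card : ℝ) := by
    have := Finset.card_le_card hsub
    rw [Fintype.card_piFinset] at this
    exact_mod_cast this
  have hX := S.hX T h i hi
  have hY := S.Y_ge_one h (i := i) hi.le
  have hk1 : (1 : ℝ) ≤ (hi' : ℝ) - lo := by
    have : (lo : ℝ) + 1 ≤ hi' := by exact_mod_cast hlt
    linarith
  have hkey : (∏ j, ((R' j).card : ℝ)) * (∏ j : Fin S.N, if (j : ℕ) < i then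
      ((S.R T j).card : ℝ) else 1) * (∏ j : Fin S.N, if j = ⟨i, hiN⟩ then S.X T i / 2 else 1) ≤
      (∏ j, ((S.R T j).card : ℝ)) * (∏ j : Fin S.N, if j = ⟨i, hiN⟩ then
        (2 * ((hi' : ℝ) - lo)) else 1) := by
    rw [← Finset.prod_mul_distrib, ← Finset.prod_mul_distrib, ← Finset.prod_mul_distrib]
    refine Finset.prod_le_prod (fun j _ => ?_) (fun j _ => ?_)
    · refine mul_nonneg (mul_nonneg (by positivity) ?_) ?_
      · split_ifs <;> positivity
      · split_ifs <;> positivity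
    · rcases lt_trichotomy (j : ℕ) i with hj | hj | hj
      · have hne : j ≠ ⟨i, hiN⟩ := fun e => by rw [e] at hj; exact lt_irrefl _ hj
        simp [hR', hj, hne]
      · have he : j = ⟨i, hiN⟩ := Fin.ext hj
        have e1 : (R' j) = Finset.Icc lo hi' := by simp [hR', hj]
        have e2 : ((Finset.Icc lo hi').card : ℝ) = (hi' : ℝ) + 1 - lo := by
          rw [Nat.card_Icc, Nat.cast_sub (by omega)]; push_cast; ring
        rw [if_neg (by omega), if_pos he, if_pos he, e1, e2, mul_one]
        have := S.R_card_ge h j (by omega)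
        rw [hj] at this
        have h1 : (hi' : ℝ) + 1 - lo ≤ 2 * ((hi' : ℝ) - lo) := by linarith
        have h2 : (0 : ℝ) ≤ (hi' : ℝ) + 1 - lo := by linarith
        calc _ ≤ (2 * ((hi' : ℝ) - lo)) * ((S.R T j).card : ℝ) :=
              mul_le_mul h1 this (by positivity) (by linarith)
          _ = _ := mul_comm _ _
      · have hne : j ≠ ⟨i, hiN⟩ := fun e => by rw [e] at hj; exact lt_irrefl _ hj
        simp [hR', hj.ne', not_lt.2 hj.le, hne]
  rw [Finset.prod_ite_eq', Finset.prod_ite_eq', if_pos (Finset.mem_univ _),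
    if_pos (Finset.mem_univ _), ← S.W_card h] at hkey
  have hg := S.prod_R_ge h hi.le
  have h5 : (F.card : ℝ) * (S.Y T i / 2 ^ i) * (S.X T i / 2) ≤
      (S.W T).card * (2 * ((hi' : ℝ) - lo)) := by
    refine le_trans ?_ hkey
    have hFn : (0 : ℝ) ≤ F.card := Nat.cast_nonneg _
    have hy0 : 0 ≤ S.Y T i / 2 ^ i := by positivity
    exact mul_le_mul_of_nonneg_right (mul_le_mul hcard hg hy0 (hFn.trans hcard)) (by positivity)
  rw [Y_succ]
  have hYX : 0 < S.Y T i * S.X T i := by positivity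
  rw [← mul_div_assoc, le_div_iff₀ hYX]
  have h6 : (F.card : ℝ) * (S.Y T i * S.X T i) =
      2 ^ (i + 1) * (F.card * (S.Y T i / 2 ^ i) * (S.X T i / 2)) := by
    rw [pow_succ]; field_simp
  rw [h6]
  calc _ ≤ 2 ^ (i + 1) * ((S.W T).card * (2 * ((hi' : ℝ) - lo))) := by gcongr
    _ = _ := by ring

lemma mu_big {T : ℕ} (h : S.big T) {i : ℕ} (hi : i < S.m) (b : Fin S.N → ℕ) {lo hi' : ℕ}
    (hlt : lo < hi') :
    S.mu T {w | (∀ j : Fin S.N, (j : ℕ) < i → w.1 j = b j) ∧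
      ∀ j : Fin S.N, (j : ℕ) = i → lo ≤ w.1 j ∧ w.1 j ≤ hi'} ≤
    ENNReal.ofReal (2 ^ (i + 2) * ((hi' : ℝ) - lo) / S.Y T (i + 1)) := by
  classical
  set F : Finset ↥(S.W T) := Finset.univ.filter (fun w =>
    (∀ j : Fin S.N, (j : ℕ) < i → w.1 j = b j) ∧
      ∀ j : Fin S.N, (j : ℕ) = i → lo ≤ w.1 j ∧ w.1 j ≤ hi') with hF
  have e : {w : ↥(S.W T) | (∀ j : Fin S.N, (j : ℕ) < i → w.1 j = b j) ∧
      ∀ j : Fin S.N, (j : ℕ) = i → lo ≤ w.1 j ∧ w.1 j ≤ hi'} = ↑F := by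
    ext w; simp [hF]
  rw [e, mu, PMF.toMeasure_apply_finset]
  have h1 : ∀ w : ↥(S.W T), S.pmf T w = ENNReal.ofReal (1 / (S.W T).card) := fun w => by
    rw [← S.p_big h w.1]; rfl
  simp_rw [h1]
  rw [Finset.sum_const, nsmul_eq_mul, ← ENNReal.ofReal_natCast,
    ← ENNReal.ofReal_mul (by positivity)]
  refine ENNReal.ofReal_le_ofReal ?_
  have h2 := S.card_big h hi b hlt (F.map (Function.Embedding.subtype _)) (by
    intro w hw
    simp only [Finset.mem_map, Function.Embedding.coe_subtype] at hw
    obtain ⟨w', hw', rfl⟩ := hw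
    simp only [hF, Finset.mem_filter, Finset.mem_univ, true_and] at hw'
    exact ⟨w'.2, hw'⟩)
  rw [Finset.card_map] at h2
  have h3 := S.W_card_pos h
  rw [mul_one_div, div_le_iff₀ h3, mul_comm]
  exact h2

/-- The constant in the local mass estimate. -/
noncomputable def CC : ℝ := 2 ^ (S.m + 2) * 9 ^ (S.m + 1) + (S.M + 1) ^ (2 * S.N + 2)

lemma partA (ω0 ω1 : S.Om) (p : ℕ) (hag : ∀ k < p, S.dg ω1 k = S.dg ω0 k)
    (hlt : S.dg ω0 p < S.dg ω1 p) :
    S.nu {ω | (∀ k < p, S.dg ω k = S.dg ω0 k) ∧ S.dg ω0 p ≤ S.dg ω p ∧ S.dg ω p ≤ S.dg ω1 p} ≤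
        ENNReal.ofReal (S.CC * (((S.dg ω1 p : ℝ) - S.dg ω0 p) /
          ((cK (S.dg ω0) p : ℝ) ^ 2 * ((S.dg ω0 p + 1) * (S.dg ω1 p + 1)))) ^ S.s) := by
  have hs0 := S.hs0
  have hs1 := S.hs1
  obtain ⟨T, i, hi, rfl⟩ := S.exists_pos p
  have hcyl : ∀ ω, (∀ k < T * S.N + i, S.dg ω k = S.dg ω0 k) → ∀ t < T, ω t = ω0 t :=
    fun ω h => S.agree fun k hk => h k (by omega)
  set k : ℝ := (S.dg ω1 (T * S.N + i) : ℝ) - S.dg ω0 (T * S.N + i) with hk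
  have hk1 : 1 ≤ k := by
    have : (S.dg ω0 (T * S.N + i) : ℝ) + 1 ≤ S.dg ω1 (T * S.N + i) := by exact_mod_cast hlt
    linarith
  have hq := cK_pos' (S.dg_pos ω0) (T * S.N)
  have hqp := cK_pos' (S.dg_pos ω0) (T * S.N + i)
  have hM : (0 : ℝ) ≤ S.M := by positivity
  by_cases h : S.big T
  · by_cases him : i < S.m
    · have hm1 : S.nu {ω | (∀ k < T * S.N + i, S.dg ω k = S.dg ω0 k) ∧
          S.dg ω0 (T * S.N + i) ≤ S.dg ω (T * S.N + i) ∧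
          S.dg ω (T * S.N + i) ≤ S.dg ω1 (T * S.N + i)} ≤
          ENNReal.ofReal (∏ t ∈ Finset.range T, S.p t (ω0 t)) *
            ENNReal.ofReal (2 ^ (i + 2) * k / S.Y T (i + 1)) := by
        refine le_trans ?_ (mul_le_mul' le_rfl (S.mu_big h him (ω0 T).1 hlt))
        rw [← S.nu_cyl']
        refine measure_mono fun ω hω => ⟨hcyl ω hω.1, fun j hj => ?_, fun j hj => ?_⟩
        · have := hω.1 (T * S.N + j) (by omega)
          rwa [S.dg_add _ _ _ j.2, S.dg_add _ _ _ j.2] at this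
        · have := hω.2
          have ej : j = ⟨i, hi⟩ := Fin.ext hj
          rw [S.dg_add ω _ _ hi] at this
          rw [ej]
          exact this
      refine hm1.trans ?_
      have hX := S.hX T h i him
      have hY := S.Y_ge_one h (i := i) him.le
      have hY' := S.Y_ge_one h (i := i + 1) him
      rw [← ENNReal.ofReal_mul (Finset.prod_nonneg fun t _ => S.p_nonneg _ _)]
      refine ENNReal.ofReal_le_ofReal ?_
      refine (mul_le_mul_of_nonneg_right (S.E1 ω0 T) (by positivity)).trans ?_
      have hcK := S.cK_big ω0 h him.le
      have hd0 := S.dg_big ω0 h him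
      have hd1 := S.dg_big ω1 h him
      set q : ℝ := (cK (S.dg ω0) (T * S.N) : ℝ) with hqdef
      set x := S.X T i with hx
      set y := S.Y T i with hy
      have eY : S.Y T (i + 1) = y * x := S.Y_succ T i
      have hkx : k ≤ x := by rw [hk]; linarith [hd0.1, hd1.2]
      have hH1 := S.hH1 T
      have hH : (y * x) ^ S.s * y ^ (S.s - 1) ≤ S.H T := by
        have h2 := S.hHX T h i him
        change _ * (S.Y T (i + 1) ^ S.s * S.Y T i ^ (S.s - 1)) ≤ _ at h2
        rw [eY] at h2
        refine le_trans (le_mul_of_one_le_left (by positivity) ?_) h2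
        exact one_le_mul_of_one_le_of_one_le (one_le_pow₀ (by norm_num))
          (one_le_pow₀ (one_le_mul_of_one_le_of_one_le (one_le_pow₀ (by norm_num))
            (one_le_pow₀ (by norm_num))))
      -- left side
      have hL : (q ^ 2) ^ (-S.s) / S.H T * (2 ^ (i + 2) * k / S.Y T (i + 1)) ≤
          2 ^ (i + 2) * ((k / x) * (q ^ 2 * y ^ 2 * x) ^ (-S.s)) := by
        rw [eY]
        have e1 : (q ^ 2 * y ^ 2 * x) ^ (-S.s) = (q ^ 2) ^ (-S.s) *
            (1 / (((y * x) ^ S.s * y ^ (S.s - 1)) * y)) := by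
          have e2 : q ^ 2 * y ^ 2 * x = q ^ 2 * ((y * x) * y) := by ring
          rw [e2, Real.mul_rpow (by positivity) (by positivity)]
          congr 1
          rw [mul_assoc ((y * x) ^ S.s), ← Real.rpow_add_one (by positivity), sub_add_cancel,
            ← Real.mul_rpow (by positivity) (by positivity), Real.rpow_neg (by positivity), one_div]
        rw [e1]
        have hv : 0 < (y * x) ^ S.s * y ^ (S.s - 1) := by positivity
        calc (q ^ 2) ^ (-S.s) / S.H T * (2 ^ (i + 2) * k / (y * x))
            ≤ (q ^ 2) ^ (-S.s) / ((y * x) ^ S.s * y ^ (S.s - 1)) *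
              (2 ^ (i + 2) * k / (y * x)) := by gcongr
          _ = _ := by
            generalize (y * x) ^ S.s * y ^ (S.s - 1) = v at hv
            field_simp
      refine hL.trans ?_
      -- right side
      have hR : (k / ((q * (3 ^ i * y)) ^ 2 * ((3 * x) * (3 * x)))) ^ S.s ≤
          (k / ((cK (S.dg ω0) (T * S.N + i) : ℝ) ^ 2 *
            ((S.dg ω0 (T * S.N + i) + 1) * (S.dg ω1 (T * S.N + i) + 1)))) ^ S.s := by
        refine Real.rpow_le_rpow (by positivity) ?_ hs0.le
        gcongr
        · linarith [hd0.2]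
        · linarith [hd1.2]
      have e3 : k / ((q * (3 ^ i * y)) ^ 2 * ((3 * x) * (3 * x))) =
          (9 ^ (i + 1))⁻¹ * ((k / x) * (q ^ 2 * y ^ 2 * x)⁻¹) := by
        have : (9 : ℝ) ^ (i + 1) = (3 ^ i) ^ 2 * 9 := by
          rw [pow_succ, ← pow_mul, mul_comm i 2, pow_mul]; norm_num
        rw [this]
        field_simp
        try ring
      have h9 : ((9 : ℝ) ^ (i + 1))⁻¹ ≤ ((9 : ℝ) ^ (i + 1))⁻¹ ^ S.s := by
        have hle : ((9 : ℝ) ^ (i + 1))⁻¹ ≤ 1 := inv_le_one_of_one_le₀ (one_le_pow₀ (by norm_num))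
        calc ((9 : ℝ) ^ (i + 1))⁻¹ = ((9 : ℝ) ^ (i + 1))⁻¹ ^ (1 : ℝ) := (Real.rpow_one _).symm
          _ ≤ _ := Real.rpow_le_rpow_of_exponent_ge (by positivity) hle hs1
      have hkx1 : k / x ≤ (k / x) ^ S.s := by
        have hle : k / x ≤ 1 := (div_le_one (by positivity)).2 hkx
        calc k / x = (k / x) ^ (1 : ℝ) := (Real.rpow_one _).symm
          _ ≤ _ := Real.rpow_le_rpow_of_exponent_ge (by positivity) hle hs1
      have hC : 2 ^ (i + 2) * 9 ^ (i + 1) ≤ S.CC := by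
        have h1 : (2 : ℝ) ^ (i + 2) * 9 ^ (i + 1) ≤ 2 ^ (S.m + 2) * 9 ^ (S.m + 1) := by
          gcongr <;> first | norm_num | omega
        have h2 : (0 : ℝ) ≤ (S.M + 1) ^ (2 * S.N + 2) := by positivity
        unfold CC; linarith
      refine le_trans ?_ (mul_le_mul hC hR (by positivity) (le_trans (by positivity) hC))
      have hv0 : 0 < q ^ 2 * y ^ 2 * x := by positivity
      have e6 : ((9 ^ (i + 1))⁻¹ * ((k / x) * (q ^ 2 * y ^ 2 * x)⁻¹)) ^ S.s =
          ((9 : ℝ) ^ (i + 1))⁻¹ ^ S.s * ((k / x) ^ S.s * (q ^ 2 * y ^ 2 * x) ^ (-S.s)) := by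
        generalize q ^ 2 * y ^ 2 * x = v at hv0
        rw [Real.mul_rpow (by positivity) (by positivity),
          Real.mul_rpow (by positivity) (by positivity), Real.inv_rpow (x := v) hv0.le,
          ← Real.rpow_neg hv0.le]
      rw [e3, e6]
      have hp : 0 ≤ (q ^ 2 * y ^ 2 * x) ^ (-S.s) := by positivity
      calc 2 ^ (i + 2) * ((k / x) * (q ^ 2 * y ^ 2 * x) ^ (-S.s))
          = 2 ^ (i + 2) * 9 ^ (i + 1) * ((9 ^ (i + 1))⁻¹ *
              ((k / x) * (q ^ 2 * y ^ 2 * x) ^ (-S.s))) := by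
            field_simp
        _ ≤ _ := by gcongr
    · rw [S.dg_big_one ω0 h (not_lt.1 him) hi, S.dg_big_one ω1 h (not_lt.1 him) hi] at hlt
      exact absurd hlt (lt_irrefl _)
  · have hm1 : S.nu {ω | (∀ k < T * S.N + i, S.dg ω k = S.dg ω0 k) ∧
          S.dg ω0 (T * S.N + i) ≤ S.dg ω (T * S.N + i) ∧
          S.dg ω (T * S.N + i) ≤ S.dg ω1 (T * S.N + i)} ≤
          ENNReal.ofReal (∏ t ∈ Finset.range T, S.p t (ω0 t)) := by
      rw [← S.nu_cyl]
      exact measure_mono fun ω hω => hcyl ω hω.1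
    refine hm1.trans (ENNReal.ofReal_le_ofReal ((S.E1' ω0 T).trans ?_))
    have hd0 := (S.dg_nbig ω0 h hi).2
    have hd1 := (S.dg_nbig ω1 h hi).2
    have hd0' : (S.dg ω0 (T * S.N + i) : ℝ) ≤ S.M := by exact_mod_cast hd0
    have hd1' : (S.dg ω1 (T * S.N + i) : ℝ) ≤ S.M := by exact_mod_cast hd1
    have hcK : (cK (S.dg ω0) (T * S.N + i) : ℝ) ≤ cK (S.dg ω0) (T * S.N) * (S.M + 1) ^ S.N := by
      have h1 := cK_add_le_prod (S.dg_pos ω0) (T * S.N) i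
      have h2 : ∏ j ∈ Finset.range i, (S.dg ω0 (T * S.N + j) + 1) ≤ (S.M + 1) ^ S.N := by
        calc _ ≤ ∏ j ∈ Finset.range i, (S.M + 1) := by
              refine Finset.prod_le_prod' fun j hj => ?_
              have := (S.dg_nbig ω0 h (i := j) (by have := Finset.mem_range.1 hj; omega)).2
              omega
          _ = (S.M + 1) ^ i := by simp
          _ ≤ _ := Nat.pow_le_pow_right (by omega) hi.le
      exact_mod_cast h1.trans (Nat.mul_le_mul_left _ h2)
    set q : ℝ := (cK (S.dg ω0) (T * S.N) : ℝ) with hqdef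
    have hR : (1 / ((q * (S.M + 1) ^ S.N) ^ 2 * (((S.M : ℝ) + 1) * (S.M + 1)))) ^ S.s ≤
          (k / ((cK (S.dg ω0) (T * S.N + i) : ℝ) ^ 2 *
            ((S.dg ω0 (T * S.N + i) + 1) * (S.dg ω1 (T * S.N + i) + 1)))) ^ S.s := by
      refine Real.rpow_le_rpow (by positivity) ?_ hs0.le
      gcongr
    have e3 : 1 / ((q * (S.M + 1) ^ S.N) ^ 2 * (((S.M : ℝ) + 1) * (S.M + 1))) =
        (((S.M : ℝ) + 1) ^ (2 * S.N + 2))⁻¹ * (q ^ 2)⁻¹ := by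
      rw [one_div, ← mul_inv]; congr 1; ring
    have hC : ((S.M : ℝ) + 1) ^ (2 * S.N + 2) ≤ S.CC := by
      unfold CC
      have : (0 : ℝ) ≤ 2 ^ (S.m + 2) * 9 ^ (S.m + 1) := by positivity
      linarith
    have h9 : (((S.M : ℝ) + 1) ^ (2 * S.N + 2))⁻¹ ≤ (((S.M : ℝ) + 1) ^ (2 * S.N + 2))⁻¹ ^ S.s := by
      have hle : (((S.M : ℝ) + 1) ^ (2 * S.N + 2))⁻¹ ≤ 1 :=
        inv_le_one_of_one_le₀ (one_le_pow₀ (by linarith))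
      calc _ = (((S.M : ℝ) + 1) ^ (2 * S.N + 2))⁻¹ ^ (1 : ℝ) := (Real.rpow_one _).symm
        _ ≤ _ := Real.rpow_le_rpow_of_exponent_ge (by positivity) hle hs1
    refine le_trans ?_ (mul_le_mul hC hR (by positivity) (le_trans (by positivity) hC))
    rw [e3, Real.mul_rpow (by positivity) (by positivity), Real.inv_rpow (x := q ^ 2) (by positivity),
        ← Real.rpow_neg (by positivity)]
    calc (q ^ 2) ^ (-S.s) = ((S.M : ℝ) + 1) ^ (2 * S.N + 2) *
          ((((S.M : ℝ) + 1) ^ (2 * S.N + 2))⁻¹ * (q ^ 2) ^ (-S.s)) := by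
          rw [← mul_assoc, mul_inv_cancel₀ (by positivity), one_mul]
      _ ≤ _ := by gcongr

lemma CC_pos : 0 < S.CC := by unfold CC; positivity

lemma main (E : Set ℝ) (hE : ∀ a : ℕ → ℕ, (∀ k, 1 ≤ a k) → (∀ t, S.big t → ∀ j < S.m,
    S.X t j ≤ a (t * S.N + j) ∧ (a (t * S.N + j) : ℝ) < 2 * S.X t j) → cF a ∈ E) :
    μH[S.s] E ≠ 0 :=
  mass_dist S.nu S.dg_measurable S.dg_pos S.hM S.dg_adm S.dg_bdd S.hs0 S.CC_pos
    S.partA S.partB E fun ω => hE _ (S.dg_pos ω) fun t ht j hj => S.dg_big ω ht hj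

end Setup


lemma lower_aux {m : ℕ} (hm : 1 ≤ m) {A c : ℕ → ℝ} (hA : ∀ i < m, 1 < A i)
    (hc : ∀ i < m, 0 < c i) {s : ℝ} (hs0 : 0 < s) (hs1 : s ≤ 1)
    (h : ∀ i < m, s < dimNum A i) : ENNReal.ofReal s ≤ dimH (setS m A c) := by
  obtain ⟨N, hmN, W0, hW1, hW⟩ := exists_words hm hA hs0.le h
  have hN : 1 ≤ N := hm.trans hmN
  set z : ℝ := (∑ w ∈ W0, ((contQ N w : ℝ) ^ 2) ^ (-s)) / 4 with hz
  have hvt : ∀ i < m, 0 < vt A s i := fun i hi => by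
    have hB1 : 0 < bb A (i + 1) := one_pos.trans (one_lt_bb hA hi)
    have hB2 : 0 < bb A i := one_pos.trans_le (one_le_bb hA hi.le)
    unfold vt; positivity
  have hr : ∀ i < m, 0 < vt A s i ^ N ∧ vt A s i ^ N < z := fun i hi => by
    refine ⟨pow_pos (hvt i hi) _, ?_⟩
    rw [hz, lt_div_iff₀ (by norm_num), mul_comm]
    exact hW i hi
  have hz1 : 1 ≤ z := by
    refine le_trans (one_le_pow₀ ?_) (hr 0 hm).2.le
    have h0 : bb A 0 = 1 := by simp [bb]
    rw [vt, h0, Real.one_rpow, mul_one]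
    exact Real.one_le_rpow (one_lt_bb hA hm).le hs0.le
  set X : ℕ → ℕ → ℝ := fun t j => c j * A j ^ (t * N + 1) with hX
  have hT : ∀ j ∈ Finset.range m, ∀ᶠ t : ℕ in atTop, 2 ≤ X t j := by
    intro j hj
    have hj := Finset.mem_range.1 hj
    have h1 : Tendsto (fun n : ℕ => c j * A j ^ n) atTop atTop :=
      (tendsto_pow_atTop_atTop_of_one_lt (hA j hj)).const_mul_atTop (hc j hj)
    have h2 : Tendsto (fun t : ℕ => t * N + 1) atTop atTop := by
      refine tendsto_atTop_mono (fun t => ?_) tendsto_id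
      simp only [id]; nlinarith
    exact (h1.comp h2).eventually_ge_atTop 2
  rw [← Finset.eventually_all] at hT
  obtain ⟨T0, hT0⟩ := eventually_atTop.1 hT
  set g : ℕ → ℝ := fun i => ∏ j ∈ Finset.range i, (c j * A j) with hg
  have hY : ∀ t i, ∏ j ∈ Finset.range i, X t j = g i * bb A i ^ (N * t) := by
    intro t i
    simp only [hg, hX, bb]
    rw [← Finset.prod_pow, ← Finset.prod_mul_distrib]
    refine Finset.prod_congr rfl fun j _ => ?_
    rw [pow_succ, mul_comm t N]; ring
  set κ : ℕ → ℝ := fun i => (2 ^ m * (3 ^ m * 2 ^ N) ^ 2) * (g (i + 1) ^ s * g i ^ (s - 1)) with hκ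
  obtain ⟨big, H, hH0, hH1, hHb, hHn, hHX, hinf⟩ := exists_sched (m := m) (κ := κ)
    (r := fun i => vt A s i ^ N) hz1 hr T0
  have hg0 : ∀ i ≤ m, 0 < g i := fun i hi => Finset.prod_pos fun j hj => by
    have hj : j < m := (Finset.mem_range.1 hj).trans_le hi
    exact mul_pos (hc j hj) (one_pos.trans (hA j hj))
  let S : Setup :=
    { m := m, N := N, M := W0.sup (fun w => Finset.univ.sup w) + 1, X := X, s := s, z := z,
      W0 := W0, big := big, H := H, hm := hm, hmN := hmN, hM := by omega, hs0 := hs0, hs1 := hs1,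
      hz := hz1, hW1 := hW1
      hWM := by
        intro w hw j
        have h1 : w j ≤ Finset.univ.sup w := Finset.le_sup (Finset.mem_univ j)
        have h2 : Finset.univ.sup w ≤ W0.sup (fun w => Finset.univ.sup w) :=
          Finset.le_sup (f := fun w : Fin N → ℕ => Finset.univ.sup w) hw
        omega
      hWz := by rw [hz]; ring
      hX := fun t ht j hj => hT0 t (hHX t ht).1 j (Finset.mem_range.2 hj)
      hH0 := hH0, hH1 := hH1, hHb := hHb, hHn := hHn
      hHX := by
        intro t ht i hi
        refine le_trans (le_of_eq ?_) ((hHX t ht).2 i hi)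
        rw [hY, hY]
        have hB1 : 0 < bb A (i + 1) := one_pos.trans (one_lt_bb hA hi)
        have hB2 : 0 < bb A i := one_pos.trans_le (one_le_bb hA hi.le)
        have hg1 := hg0 (i + 1) hi
        have hg2 := hg0 i hi.le
        have e : ∀ (b : ℝ), 0 < b → ∀ u : ℝ, (b ^ (N * t)) ^ u = (b ^ u) ^ (N * t) := by
          intro b hb u
          rw [← Real.rpow_natCast, ← Real.rpow_natCast, ← Real.rpow_mul hb.le,
            ← Real.rpow_mul hb.le, mul_comm]
        rw [Real.mul_rpow hg1.le (by positivity), Real.mul_rpow hg2.le (by positivity),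
          e _ hB1, e _ hB2]
        simp only [hκ]
        rw [← pow_mul, vt, mul_pow]
        ring }
  have hmain := S.main (setS m A c ∪ Set.range ((↑) : ℚ → ℝ)) (by
    intro a ha hab
    by_cases hi : Irrational (cF a)
    · refine Or.inl ⟨⟨cF_pos ha, cF_lt_one ha⟩, hi, ?_⟩
      refine Set.infinite_of_forall_exists_gt fun n => ?_
      obtain ⟨t, hnt, hbt⟩ := hinf n
      refine ⟨t * N + 1, ?_, by nlinarith⟩
      intro i hi
      have := hab t hbt i hi
      have e : t * N + 1 + i = t * N + i + 1 := by ring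
      rw [e, pq_cF ha]
      exact this
    · right
      unfold Irrational at hi
      exact not_not.1 hi)
  have h1 : ENNReal.ofReal s ≤ dimH (setS m A c ∪ Set.range ((↑) : ℚ → ℝ)) := by
    have h2 : μH[((⟨s, hs0.le⟩ : NNReal) : ℝ)] (setS m A c ∪ Set.range ((↑) : ℚ → ℝ)) ≠ 0 := hmain
    have := le_dimH_of_hausdorffMeasure_ne_zero h2
    rwa [ENNReal.ofReal, Real.toNNReal_of_nonneg hs0.le]
  rw [dimH_union, dimH_countable (Set.countable_range _)] at h1
  simpa using h1

lemma hdim_main (m : ℕ) (hm : 1 ≤ m) (A c : ℕ → ℝ)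
    (hA : ∀ i < m, 1 < A i) (hc : ∀ i < m, 0 < c i)
    (hne : (Finset.range m).Nonempty) :
    dimH (setS m A c) = ENNReal.ofReal ((Finset.range m).inf' hne (dimNum A)) := by
  apply le_antisymm
  · obtain ⟨i, hi, he⟩ := Finset.exists_mem_eq_inf' hne (dimNum A)
    rw [he]
    exact upper_bound hA hc (Finset.mem_range.1 hi)
  · set d := (Finset.range m).inf' hne (dimNum A) with hd
    have hdl : ∀ i < m, d ≤ dimNum A i := fun i hi => Finset.inf'_le _ (Finset.mem_range.2 hi)
    have hd1 : d ≤ 1 := by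
      refine (hdl 0 hm).trans ?_
      rw [dimNum_eq]
      exact gExp_le_one (one_lt_bb hA hm).le
    rcases le_or_gt d 0 with h0 | h0
    · rw [ENNReal.ofReal_of_nonpos h0]; exact zero_le
    · have ht : Tendsto (fun k : ℕ => ENNReal.ofReal (d * (1 - 1 / ((k : ℝ) + 2)))) atTop
          (nhds (ENNReal.ofReal d)) := by
        refine ENNReal.tendsto_ofReal ?_
        have h1 : Tendsto (fun k : ℕ => 1 / ((k : ℝ) + 2)) atTop (nhds 0) := by
          have := (tendsto_one_div_add_atTop_nhds_zero_nat (𝕜 := ℝ)).comp (tendsto_add_atTop_nat 1)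
          refine this.congr fun k => ?_
          simp only [Function.comp]; push_cast; ring_nf
        have := (h1.const_sub 1).const_mul d
        simpa using this
      refine le_of_tendsto' ht fun k => ?_
      have h2 : 1 / ((k : ℝ) + 2) < 1 := by
        rw [div_lt_one (by positivity)]
        have : (0 : ℝ) ≤ k := by positivity
        linarith
      have h3 : 0 < 1 / ((k : ℝ) + 2) := by positivity
      have h4 : d * (1 - 1 / ((k : ℝ) + 2)) < d := by nlinarith
      exact lower_aux hm hA hc (mul_pos h0 (by linarith)) (h4.le.trans hd1)
        fun i hi => h4.trans_le (hdl i hi)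

theorem hausdorff_dim_Sm (m : ℕ) (hm : 1 ≤ m) (A c : ℕ → ℝ)
    (hA : ∀ i < m, 1 < A i) (hc : ∀ i < m, 0 < c i) :
    dimH {x : ℝ | x ∈ Set.Ioo (0 : ℝ) 1 ∧ Irrational x ∧
      {n : ℕ | ∀ i < m, c i * A i ^ n ≤ (pq x (n + i) : ℝ) ∧
        (pq x (n + i) : ℝ) < 2 * (c i * A i ^ n)}.Infinite} =
    ENNReal.ofReal
      ((Finset.range m).inf' (Finset.nonempty_range_iff.mpr (by omega)) (dimNum A)) := by
  exact hdim_main m hm A c hA hc _
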